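/- Fix m ∈ ℕ. Let (F_n) be a sequence with F_n = P_n(N^{(n)}), N^{(n)} ~ γ_{K_n}, where P_n is a polynomial of total degree at most m. Write P_n = Q_n + R_n for the unique decomposition with Q_n in the linear span of the products ∏_i H_{k_i}(x_i) with Σ_i k_i = m and R_n a polynomial of total degree at most m−1, and set J_m F_n := Q_n(N^{(n)}). Assume: (i) the laws of J_m F_n converge weakly to N(0,1); (ii) sup_n E[F_n²] < ∞. Then for every q ≥ 1 there exist N ∈ ℕ and C > 0 such that E[ Γ[F_n,F_n]^{−q} ] ≤ C for all n ≥ N, where Γ[F_n,F_n] := Σ_{k=1}^{K_n} (∂_k P_n(N^{(n)}))². -/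

import Mathlib

open MeasureTheory ProbabilityTheory MvPolynomial Filter Topology

noncomputable def gaussPi (ι : Type) [Fintype ι] : Measure (ι → ℝ) :=
  Measure.pi fun _ => gaussianReal 0 1

noncomputable def hermiteProd {K : ℕ} (k : Fin K → ℕ) : MvPolynomial (Fin K) ℝ :=
  ∏ i, Polynomial.aeval (MvPolynomial.X i) (Polynomial.hermite (k i))

noncomputable def chaos (K m : ℕ) : Submodule ℝ (MvPolynomial (Fin K) ℝ) :=
  Submodule.span ℝ {P | ∃ k : Fin K → ℕ, ∑ i, k i = m ∧ P = hermiteProd k}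

noncomputable def sqField {ι : Type} [Fintype ι] (P : MvPolynomial ι ℝ) (x : ι → ℝ) : ℝ :=
  ∑ i, (eval x (pderiv i P)) ^ 2

def TendstoInLaw {E : Type} [MeasurableSpace E] [TopologicalSpace E]
    (μs : ℕ → Measure E) (μ : Measure E) : Prop :=
  ∀ f : BoundedContinuousFunction E ℝ,
    Tendsto (fun n => ∫ x, f x ∂μs n) atTop (𝓝 (∫ x, f x ∂μ))

/-
For an eigenfunction of the number operator, asymptotic normality of `Q n` forces the fourth
cumulant to vanish (hypercontractivity upgrades convergence in law to convergence of moments). The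
fourth moment argument is applied not only to `Q n` but to its polarizations along independent
Gaussian copies, so the squared norm of the top-order derivative `D^(d+1) Q n`, contracted with `d`
independent Gaussian vectors, concentrates around a positive constant.

The gradient of `P n` is a polynomial map of degree `d`. Its Laplace transform
`E exp (-‖t ∇P‖² / 2)` is an average of characteristic functions, and `d` Cauchy-Schwarz
differencings bound a power of it by the Laplace transform of the `d`-linear form above: this step
annihilates the terms of lower degree, all of `R n` included. Rotating the Gaussian arguments of a
multilinear form gives a contraction inequality in `t`, hence decay faster than any power of `t`,
and a dyadic decomposition turns this decay into bounds on negative moments.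
-/

section PartialDerivatives

variable {σ R : Type*} [CommSemiring R]

lemma pderiv_pderiv_comm (i j : σ) (p : MvPolynomial σ R) :
    pderiv i (pderiv j p) = pderiv j (pderiv i p) := by
  classical
  induction p using MvPolynomial.induction_on with
  | C a => simp
  | add p q hp hq => simp only [map_add, hp, hq]
  | mul_X p k hp =>
    have constant (a b : σ) : pderiv a (pderiv b (X k : MvPolynomial σ R)) = 0 := by
      simp [pderiv_X, Pi.single_apply, apply_ite]
    simp only [pderiv_mul, map_add, hp, constant]
    ring

lemma pderiv_X_mul [DecidableEq σ] (i j : σ) (p : MvPolynomial σ R) :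
    pderiv i (X j * p) = X j * pderiv i p + if i = j then p else 0 := by
  rw [pderiv_mul, pderiv_X]
  by_cases h : i = j
  · subst h; simp; ring
  · simp [h, Ne.symm h]

lemma pderiv_sq (i : σ) (p : MvPolynomial σ R) : pderiv i (p ^ 2) = 2 * p * pderiv i p := by
  rw [pderiv_pow]; simp

lemma totalDegree_pderiv_le (i : σ) (p : MvPolynomial σ R) :
    (pderiv i p).totalDegree ≤ p.totalDegree - 1 := by
  classical
  conv_lhs => rw [p.as_sum, map_sum]
  refine totalDegree_finsetSum_le fun s hs => ?_
  rw [pderiv_monomial]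
  by_cases h : s i = 0
  · simp [h]
  · have hdeg := congrArg Finsupp.degree (tsub_add_cancel_of_le
      (Finsupp.single_le_iff.2 (Nat.one_le_iff_ne_zero.2 h)))
    have hle : s.degree ≤ p.totalDegree := le_totalDegree hs
    rw [map_add, Finsupp.degree_single] at hdeg
    refine (totalDegree_monomial_le _ _).trans ?_
    change (s - Finsupp.single i 1).degree ≤ _
    omega

lemma pderiv_eq_zero_of_totalDegree_eq_zero {p : MvPolynomial σ R} (hp : p.totalDegree = 0)
    (i : σ) : pderiv i p = 0 := by
  rw [totalDegree_eq_zero_iff_eq_C.1 hp, pderiv_C]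

lemma pderiv_rename_of_notMem_range {τ : Type*} {f : σ → τ} {t : τ} (ht : t ∉ Set.range f)
    (p : MvPolynomial σ R) : pderiv t (rename f p) = 0 := by
  classical
  refine pderiv_eq_zero_of_notMem_vars fun h => ht ?_
  obtain ⟨s, -, hs⟩ := Finset.mem_image.1 (vars_rename f p h)
  exact ⟨s, hs⟩

end PartialDerivatives

section GaussianIntegrationByParts

lemma integral_sub_mul_gaussianReal {μ : ℝ} {v : NNReal} {f f' : ℝ → ℝ}
    (hf : ∀ x, HasDerivAt f (f' x) x) (hfi : Integrable f (gaussianReal μ v))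
    (hf'i : Integrable f' (gaussianReal μ v))
    (hxf : Integrable (fun x => (x - μ) * f x) (gaussianReal μ v)) :
    ∫ x, (x - μ) * f x ∂gaussianReal μ v = v * ∫ x, f' x ∂gaussianReal μ v := by
  rcases eq_or_ne v 0 with rfl | hv
  · simp
  have integrable_pdf {g : ℝ → ℝ} (hg : Integrable g (gaussianReal μ v)) :
      Integrable (fun x => g x * gaussianPDFReal μ v x) := by
    rw [gaussianReal_of_var_ne_zero _ hv, integrable_withDensity_iff_integrable_smul'
      (measurable_gaussianPDF _ _) (ae_of_all _ fun _ => gaussianPDF_lt_top)] at hg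
    simpa [mul_comm] using hg
  have pdf_deriv (x : ℝ) :
      HasDerivAt (gaussianPDFReal μ v) (-(x - μ) / v * gaussianPDFReal μ v x) x := by
    have h := ((((hasDerivAt_id x).sub_const μ).pow 2).neg.div_const (2 * (v : ℝ))).exp.const_mul
      (√(2 * Real.pi * v))⁻¹
    refine h.congr_deriv ?_
    simp only [gaussianPDFReal, id]
    simp only [Pi.neg_apply, Pi.pow_apply]
    field_simp
    simp
  have hv' : (v : ℝ) ≠ 0 := NNReal.coe_ne_zero.2 hv
  have parts := integral_mul_deriv_eq_deriv_mul_of_integrable (fun x _ => hf x)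
    (fun x _ => pdf_deriv x)
    (((integrable_pdf hxf).const_mul (-(v : ℝ)⁻¹)).congr (ae_of_all _ fun x => by
      simp only [Pi.mul_apply]; ring))
    (integrable_pdf hf'i) (integrable_pdf hfi)
  rw [integral_gaussianReal_eq_integral_smul hv, integral_gaussianReal_eq_integral_smul hv]
  calc ∫ x, gaussianPDFReal μ v x • ((x - μ) * f x)
      = -v * ∫ x, f x * (-(x - μ) / v * gaussianPDFReal μ v x) := by
        rw [← integral_const_mul]
        congr with x
        simp only [smul_eq_mul]
        field_simp
    _ = v * ∫ x, gaussianPDFReal μ v x • f' x := by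
        rw [parts]
        simp only [smul_eq_mul, mul_comm (f' _)]
        ring

lemma integrable_pow_gaussianReal (μ : ℝ) (v : NNReal) (k : ℕ) :
    Integrable (fun x => x ^ k) (gaussianReal μ v) :=
  (memLp_id_gaussianReal' (μ := μ) (v := v) (k : ENNReal) (by simp)).integrable_norm_pow'.mono'
    (by fun_prop) (ae_of_all _ fun x => by simp)

lemma integral_pow_succ_gaussianReal (k : ℕ) :
    ∫ x, x ^ (k + 1) ∂gaussianReal 0 1 = k * ∫ x, x ^ (k - 1) ∂gaussianReal 0 1 := by
  have h := integral_sub_mul_gaussianReal (μ := 0) (v := 1) (fun x => hasDerivAt_pow k x)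
    (integrable_pow_gaussianReal 0 1 k) ((integrable_pow_gaussianReal 0 1 (k - 1)).const_mul _)
    (by simpa only [sub_zero, ← pow_succ'] using integrable_pow_gaussianReal 0 1 (k + 1))
  simpa only [sub_zero, ← pow_succ', NNReal.coe_one, one_mul, integral_const_mul] using h

end GaussianIntegrationByParts

section GaussianExpectation

variable {ι κ : Type} [Fintype ι] [Fintype κ]

instance isProbabilityMeasure_gaussPi : IsProbabilityMeasure (gaussPi ι) := by
  unfold gaussPi; infer_instance

lemma integrable_eval_gaussPi (p : MvPolynomial ι ℝ) :
    Integrable (fun x => eval x p) (gaussPi ι) := by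
  induction p using MvPolynomial.induction_on' with
  | monomial s a =>
    simp only [eval_monomial, Finsupp.prod_pow]
    exact (Integrable.fintype_prod (f := fun i x => x ^ s i)
      fun i => integrable_pow_gaussianReal 0 1 (s i)).const_mul a
  | add p q hp hq => simp only [map_add]; exact hp.add hq

/-- The expectation of a polynomial in independent standard Gaussian variables, as a linear form
on polynomials. -/
noncomputable def gaussExpect : MvPolynomial ι ℝ →ₗ[ℝ] ℝ where
  toFun p := ∫ x, eval x p ∂gaussPi ι
  map_add' p q := by
    simp only [map_add]
    exact integral_add (integrable_eval_gaussPi p) (integrable_eval_gaussPi q)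
  map_smul' a p := by simp only [smul_eval, integral_const_mul, RingHom.id_apply, smul_eq_mul]

lemma gaussExpect_apply (p : MvPolynomial ι ℝ) : gaussExpect p = ∫ x, eval x p ∂gaussPi ι := rfl

lemma gaussExpect_C (a : ℝ) : gaussExpect (C a : MvPolynomial ι ℝ) = a := by
  simp [gaussExpect_apply]

lemma gaussExpect_monomial (s : ι →₀ ℕ) (a : ℝ) :
    gaussExpect (monomial s a) = a * ∏ i, ∫ x, x ^ s i ∂gaussianReal 0 1 := by
  simp only [gaussExpect_apply, eval_monomial, Finsupp.prod_pow, integral_const_mul]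
  exact congrArg _ (integral_fintype_prod_eq_prod fun i (x : ℝ) => x ^ s i)

lemma gaussExpect_mono {p q : MvPolynomial ι ℝ} (h : ∀ x, eval x p ≤ eval x q) :
    gaussExpect p ≤ gaussExpect q :=
  integral_mono (integrable_eval_gaussPi p) (integrable_eval_gaussPi q) h

lemma gaussExpect_nonneg {p : MvPolynomial ι ℝ} (h : ∀ x, 0 ≤ eval x p) : 0 ≤ gaussExpect p :=
  integral_nonneg h

lemma gaussExpect_sq_nonneg (p : MvPolynomial ι ℝ) : 0 ≤ gaussExpect (p ^ 2) :=
  gaussExpect_nonneg fun x => by rw [map_pow]; exact sq_nonneg _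

lemma gaussExpect_rename {f : ι → κ} (hf : Function.Injective f) (p : MvPolynomial ι ℝ) :
    gaussExpect (rename f p) = gaussExpect p := by
  induction p using MvPolynomial.induction_on' with
  | monomial s a =>
    rw [rename_monomial, gaussExpect_monomial, gaussExpect_monomial]
    congr 1
    refine (Fintype.prod_of_injective f hf _ _ (fun t ht => ?_) fun i => ?_).symm
    · simp [Finsupp.mapDomain_of_notMem_range _ _ ht]
    · rw [Finsupp.mapDomain_apply hf]
  | add p q hp hq => simp only [map_add, hp, hq]

lemma gaussExpect_X_mul (i : ι) (p : MvPolynomial ι ℝ) :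
    gaussExpect (X i * p) = gaussExpect (pderiv i p) := by
  classical
  induction p using MvPolynomial.induction_on' with
  | monomial s a =>
    rw [X, monomial_mul, pderiv_monomial, gaussExpect_monomial, gaussExpect_monomial, one_mul,
      mul_assoc, ← Finset.mul_prod_erase _ _ (Finset.mem_univ i),
      ← Finset.mul_prod_erase _ _ (Finset.mem_univ i), ← mul_assoc (s i : ℝ)]
    congr 2
    · simpa [add_comm] using integral_pow_succ_gaussianReal (s i)
    · refine Finset.prod_congr rfl fun j hj => ?_
      simp [Finset.ne_of_mem_erase hj]
  | add p q hp hq => simp only [mul_add, map_add, hp, hq]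

/-- The variance of a polynomial in independent standard Gaussian variables. -/
noncomputable def gaussVar (p : MvPolynomial ι ℝ) : ℝ :=
  gaussExpect (p ^ 2) - gaussExpect p ^ 2

lemma gaussVar_eq_gaussExpect_sub_sq (p : MvPolynomial ι ℝ) :
    gaussVar p = gaussExpect ((p - C (gaussExpect p)) ^ 2) := by
  have h : (p - C (gaussExpect p)) ^ 2
      = p ^ 2 - (2 * gaussExpect p) • p + C (gaussExpect p ^ 2) := by
    simp only [smul_eq_C_mul, map_mul, map_ofNat, map_pow]; ring
  rw [h, map_add, map_sub, map_smul, gaussExpect_C, gaussVar, smul_eq_mul]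
  ring

lemma gaussVar_sub_le (p q : MvPolynomial ι ℝ) :
    gaussVar (p - q) ≤ 2 * gaussVar p + 2 * gaussVar q := by
  simp only [gaussVar_eq_gaussExpect_sub_sq, ← smul_eq_mul, ← map_smul, ← map_add]
  refine gaussExpect_mono fun x => ?_
  simp only [map_sub, map_add, map_pow, smul_eval, eval_C]
  nlinarith [sq_nonneg (eval x p - gaussExpect p + (eval x q - gaussExpect q))]

lemma gaussVar_sum_le {α : Type*} (s : Finset α) (f : α → MvPolynomial ι ℝ) :
    gaussVar (∑ a ∈ s, f a) ≤ s.card * ∑ a ∈ s, gaussVar (f a) := by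
  simp only [gaussVar_eq_gaussExpect_sub_sq, ← map_sum, ← smul_eq_mul, ← map_smul]
  refine gaussExpect_mono fun x => ?_
  simp only [map_sum, map_sub, map_pow, smul_eval, eval_C, ← Finset.sum_sub_distrib]
  exact sq_sum_le_card_mul_sum_sq

/-- The fourth cumulant of a centred polynomial in independent standard Gaussian variables. -/
noncomputable def fourthCumulant (p : MvPolynomial ι ℝ) : ℝ :=
  gaussExpect (p ^ 4) - 3 * gaussExpect (p ^ 2) ^ 2

lemma fourthCumulant_rename {f : ι → κ} (hf : Function.Injective f) (p : MvPolynomial ι ℝ) :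
    fourthCumulant (rename f p) = fourthCumulant p := by
  simp only [fourthCumulant, ← map_pow (rename f), gaussExpect_rename hf]

end GaussianExpectation

section NumberOperator

variable {ι : Type} [Fintype ι]

/-- The number operator, minus the Ornstein–Uhlenbeck generator: the `m`-th Wiener chaos is its
eigenspace for the eigenvalue `m`. -/
noncomputable def numberOp : MvPolynomial ι ℝ →ₗ[ℝ] MvPolynomial ι ℝ where
  toFun p := ∑ i, (X i * pderiv i p - pderiv i (pderiv i p))
  map_add' p q := by
    simp only [map_add, ← Finset.sum_add_distrib]
    exact Finset.sum_congr rfl fun i _ => by ring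
  map_smul' a p := by
    simp only [Derivation.map_smul, mul_smul_comm, ← smul_sub, ← Finset.smul_sum, RingHom.id_apply]

/-- The square field `sqField p`, as a polynomial. -/
noncomputable def carreDuChamp (p : MvPolynomial ι ℝ) : MvPolynomial ι ℝ :=
  ∑ i, pderiv i p ^ 2

lemma numberOp_apply (p : MvPolynomial ι ℝ) :
    numberOp p = ∑ i, (X i * pderiv i p - pderiv i (pderiv i p)) := rfl

lemma numberOp_X_mul (k : ι) (p : MvPolynomial ι ℝ) :
    numberOp (X k * p) = X k * numberOp p + X k * p - 2 * pderiv k p := by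
  classical
  have term (i : ι) : X i * pderiv i (X k * p) - pderiv i (pderiv i (X k * p))
      = X k * (X i * pderiv i p - pderiv i (pderiv i p))
        + if i = k then X k * p - 2 * pderiv k p else 0 := by
    simp only [pderiv_X_mul, map_add]
    split_ifs with h
    · subst h; ring
    · rw [map_zero]; ring
  simp only [numberOp_apply, term, Finset.sum_add_distrib, ← Finset.mul_sum, Finset.sum_ite_eq',
    Finset.mem_univ, if_true]
  ring

lemma numberOp_sq (p : MvPolynomial ι ℝ) :
    numberOp (p ^ 2) = 2 * (p * numberOp p) - 2 * carreDuChamp p := by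
  simp only [numberOp_apply, carreDuChamp, Finset.mul_sum, ← Finset.sum_sub_distrib]
  refine Finset.sum_congr rfl fun i _ => ?_
  simp only [sq, pderiv_mul, map_add]
  ring

lemma pderiv_numberOp (i : ι) (p : MvPolynomial ι ℝ) :
    pderiv i (numberOp p) = numberOp (pderiv i p) + pderiv i p := by
  classical
  have term (j : ι) : pderiv i (X j * pderiv j p - pderiv j (pderiv j p))
      = (X j * pderiv j (pderiv i p) - pderiv j (pderiv j (pderiv i p)))
        + if i = j then pderiv j p else 0 := by
    rw [map_sub, pderiv_X_mul, pderiv_pderiv_comm i j, pderiv_pderiv_comm i j,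
      pderiv_pderiv_comm i j]
    ring
  simp only [numberOp_apply, map_sum, term, Finset.sum_add_distrib, Finset.sum_ite_eq,
    Finset.mem_univ, if_true]

lemma numberOp_pderiv {m : ℕ} {p : MvPolynomial ι ℝ} (hp : numberOp p = ((m + 1 : ℕ) : ℝ) • p)
    (i : ι) : numberOp (pderiv i p) = (m : ℝ) • pderiv i p := by
  have h := pderiv_numberOp i p
  rw [hp, Derivation.map_smul, ← sub_eq_iff_eq_add] at h
  rw [← h, Nat.cast_succ, add_smul, one_smul, add_sub_cancel_right]

lemma gaussExpect_numberOp_mul (p q : MvPolynomial ι ℝ) :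
    gaussExpect (numberOp p * q) = ∑ i, gaussExpect (pderiv i p * pderiv i q) := by
  rw [numberOp_apply, Finset.sum_mul, map_sum]
  refine Finset.sum_congr rfl fun i _ => ?_
  have h := gaussExpect_X_mul i (pderiv i p * q)
  rw [pderiv_mul, map_add, ← mul_assoc] at h
  rw [sub_mul, map_sub, h, add_sub_cancel_left]

lemma gaussExpect_carreDuChamp (p : MvPolynomial ι ℝ) :
    gaussExpect (carreDuChamp p) = gaussExpect (numberOp p * p) := by
  simp only [gaussExpect_numberOp_mul, carreDuChamp, map_sum, sq]

lemma gaussExpect_carreDuChamp_of_eigen {m : ℝ} {p : MvPolynomial ι ℝ}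
    (hp : numberOp p = m • p) : gaussExpect (carreDuChamp p) = m * gaussExpect (p ^ 2) := by
  rw [gaussExpect_carreDuChamp, hp, smul_mul_assoc, map_smul, sq, smul_eq_mul]

lemma gaussExpect_numberOp_sq (p : MvPolynomial ι ℝ) :
    gaussExpect (numberOp p ^ 2)
      = gaussExpect (carreDuChamp p) + ∑ i, gaussExpect (carreDuChamp (pderiv i p)) := by
  rw [sq, gaussExpect_numberOp_mul, carreDuChamp, map_sum, ← Finset.sum_add_distrib]
  refine Finset.sum_congr rfl fun i _ => ?_
  rw [pderiv_numberOp, mul_add, map_add, gaussExpect_carreDuChamp, mul_comm, add_comm, sq]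

lemma gaussExpect_numberOp_sq_le_of_forall_pderiv {D : ℕ} {p : MvPolynomial ι ℝ}
    (h : ∀ i, gaussExpect (carreDuChamp (pderiv i p)) ≤ D * gaussExpect (pderiv i p ^ 2)) :
    gaussExpect (numberOp p ^ 2) ≤ (D + 1 : ℕ) * gaussExpect (carreDuChamp p) := by
  have hsum : ∑ i, gaussExpect (carreDuChamp (pderiv i p)) ≤ D * gaussExpect (carreDuChamp p) := by
    rw [carreDuChamp, map_sum, Finset.mul_sum]
    exact Finset.sum_le_sum fun i _ => h i
  rw [gaussExpect_numberOp_sq, Nat.cast_succ]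
  linarith

lemma gaussExpect_carreDuChamp_le {D : ℕ} {p : MvPolynomial ι ℝ} (hp : p.totalDegree ≤ D) :
    gaussExpect (carreDuChamp p) ≤ D * gaussExpect (p ^ 2) := by
  induction D generalizing p with
  | zero =>
    simp [carreDuChamp, pderiv_eq_zero_of_totalDegree_eq_zero (Nat.le_zero.1 hp)]
  | succ D ih =>
    have hN := gaussExpect_numberOp_sq_le_of_forall_pderiv fun i =>
      ih ((totalDegree_pderiv_le i p).trans (Nat.sub_le_of_le_add hp))
    set d : ℝ := ((D + 1 : ℕ) : ℝ)
    have hd : 0 < d := by positivity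
    have hsq := gaussExpect_sq_nonneg (numberOp p - d • p)
    have expand : (numberOp p - d • p) ^ 2
        = numberOp p ^ 2 - (2 * d) • (numberOp p * p) + d ^ 2 • p ^ 2 := by
      simp only [smul_eq_C_mul, map_mul, map_pow, map_ofNat]; ring
    simp only [expand, map_add, map_sub, map_smul, ← gaussExpect_carreDuChamp, smul_eq_mul] at hsq
    exact le_of_mul_le_mul_left (by linarith) hd

lemma gaussExpect_numberOp_sq_le {D : ℕ} {p : MvPolynomial ι ℝ} (hp : p.totalDegree ≤ D) :
    gaussExpect (numberOp p ^ 2) ≤ D * gaussExpect (carreDuChamp p) := by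
  cases D with
  | zero =>
    simp [numberOp_apply, carreDuChamp,
      pderiv_eq_zero_of_totalDegree_eq_zero (Nat.le_zero.1 hp)]
  | succ D =>
    exact gaussExpect_numberOp_sq_le_of_forall_pderiv fun i =>
      gaussExpect_carreDuChamp_le ((totalDegree_pderiv_le i p).trans (Nat.sub_le_of_le_add hp))

lemma gaussExpect_carreDuChamp_mul_sq_of_eigen {m : ℝ} {p : MvPolynomial ι ℝ}
    (hp : numberOp p = m • p) :
    3 * gaussExpect (carreDuChamp p * p ^ 2) = m * gaussExpect (p ^ 4) := by
  have parts : gaussExpect (numberOp p * p ^ 3) = 3 * gaussExpect (carreDuChamp p * p ^ 2) := by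
    rw [gaussExpect_numberOp_mul, carreDuChamp, Finset.sum_mul, map_sum, Finset.mul_sum]
    refine Finset.sum_congr rfl fun i _ => ?_
    have h : pderiv i p * pderiv i (p ^ 3) = (3 : ℝ) • (pderiv i p ^ 2 * p ^ 2) := by
      rw [pderiv_pow, smul_eq_C_mul, map_ofNat, Nat.cast_ofNat]
      ring
    rw [h, map_smul, smul_eq_mul]
  rw [← parts, hp, smul_mul_assoc, ← pow_succ', map_smul, smul_eq_mul]

lemma gaussVar_carreDuChamp_le {m : ℕ} {p : MvPolynomial ι ℝ} (hp : numberOp p = (m : ℝ) • p)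
    (hdeg : p.totalDegree ≤ m) :
    gaussVar (carreDuChamp p) ≤ m ^ 2 / 3 * fourthCumulant p := by
  have hN : numberOp (p ^ 2) = (2 * m : ℝ) • p ^ 2 - (2 : ℝ) • carreDuChamp p := by
    rw [numberOp_sq, hp]
    simp only [smul_eq_C_mul, map_mul, map_ofNat]
    ring
  have key := gaussExpect_numberOp_sq_le (D := 2 * m) (p := p ^ 2)
    ((totalDegree_pow p 2).trans (Nat.mul_le_mul_left 2 hdeg))
  have expand_sq : ((2 * m : ℝ) • p ^ 2 - (2 : ℝ) • carreDuChamp p) ^ 2 = (4 * m ^ 2 : ℝ) • p ^ 4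
      - (8 * m : ℝ) • (carreDuChamp p * p ^ 2) + (4 : ℝ) • carreDuChamp p ^ 2 := by
    simp only [smul_eq_C_mul, map_mul, map_ofNat, map_pow]; ring
  have expand_mul : ((2 * m : ℝ) • p ^ 2 - (2 : ℝ) • carreDuChamp p) * p ^ 2
      = (2 * m : ℝ) • p ^ 4 - (2 : ℝ) • (carreDuChamp p * p ^ 2) := by
    simp only [smul_eq_C_mul, map_mul, map_ofNat]; ring
  have mixed := gaussExpect_carreDuChamp_mul_sq_of_eigen hp
  rw [gaussExpect_carreDuChamp, hN, expand_sq, expand_mul] at key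
  simp only [map_add, map_sub, map_smul, smul_eq_mul, Nat.cast_mul, Nat.cast_ofNat] at key
  rw [gaussVar, fourthCumulant, gaussExpect_carreDuChamp_of_eigen hp]
  nlinarith

end NumberOperator

section Hypercontractivity

variable {ι κ : Type} [Fintype κ]

/-- The squared Euclidean norm of a vector of polynomials. -/
noncomputable def polyNormSq (V : κ → MvPolynomial ι ℝ) : MvPolynomial ι ℝ :=
  ∑ j, V j ^ 2

lemma eval_polyNormSq_nonneg (V : κ → MvPolynomial ι ℝ) (x : ι → ℝ) :
    0 ≤ eval x (polyNormSq V) := by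
  simp only [polyNormSq, map_sum, map_pow]
  positivity

lemma pderiv_polyNormSq (V : κ → MvPolynomial ι ℝ) (i : ι) :
    pderiv i (polyNormSq V) = 2 * ∑ j, V j * pderiv i (V j) := by
  simp only [polyNormSq, map_sum, pderiv_sq, Finset.mul_sum, mul_assoc]

/-- The Jacobian matrix of a vector of polynomials, flattened to a vector. -/
noncomputable def polyJacobian (V : κ → MvPolynomial ι ℝ) : κ × ι → MvPolynomial ι ℝ :=
  fun ji => pderiv ji.2 (V ji.1)

variable [Fintype ι]

lemma polyNormSq_polyJacobian (V : κ → MvPolynomial ι ℝ) :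
    polyNormSq (polyJacobian V) = ∑ j, carreDuChamp (V j) :=
  Fintype.sum_prod_type _

lemma gaussExpect_polyNormSq_polyJacobian {m : ℝ} {V : κ → MvPolynomial ι ℝ}
    (hV : ∀ j, numberOp (V j) = m • V j) :
    gaussExpect (polyNormSq (polyJacobian V)) = m * gaussExpect (polyNormSq V) := by
  rw [polyNormSq_polyJacobian, polyNormSq]
  simp only [map_sum, Finset.mul_sum, gaussExpect_carreDuChamp_of_eigen (hV _)]

lemma sum_sq_mul_pow_add_le (a b : κ → ℝ) (k : ℕ) :
    (∑ j, b j ^ 2) * (∑ j, a j ^ 2) ^ k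
      + 2 * k * ((∑ j, a j * b j) ^ 2 * (∑ j, a j ^ 2) ^ (k - 1))
      ≤ (2 * k + 1) * ((∑ j, b j ^ 2) * (∑ j, a j ^ 2) ^ k) := by
  rcases k with _ | k
  · simp
  have cauchy : (∑ j, a j * b j) ^ 2 * (∑ j, a j ^ 2) ^ k
      ≤ (∑ j, b j ^ 2) * (∑ j, a j ^ 2) ^ (k + 1) := by
    rw [pow_succ' (∑ j, a j ^ 2), ← mul_assoc, mul_comm (∑ j, b j ^ 2)]
    gcongr
    exact Finset.sum_mul_sq_le_sq_mul_sq _ _ _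
  have := mul_le_mul_of_nonneg_left cauchy (by positivity : (0 : ℝ) ≤ 2 * (k + 1 : ℕ))
  rw [Nat.add_sub_cancel]
  linarith

lemma gaussExpect_polyNormSq_pow_succ_le {m : ℝ} {V : κ → MvPolynomial ι ℝ}
    (hV : ∀ j, numberOp (V j) = m • V j) (k : ℕ) :
    m * gaussExpect (polyNormSq V ^ (k + 1))
      ≤ (2 * k + 1) * gaussExpect (polyNormSq (polyJacobian V) * polyNormSq V ^ k) := by
  set W := polyNormSq V with hW
  have parts : m * gaussExpect (W ^ (k + 1))
      = gaussExpect (∑ i, ∑ j, pderiv i (V j) * pderiv i (V j * W ^ k)) := by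
    calc m * gaussExpect (W ^ (k + 1)) = ∑ j, gaussExpect (numberOp (V j) * (V j * W ^ k)) := by
          simp only [hV, smul_mul_assoc, map_smul, smul_eq_mul, ← Finset.mul_sum, ← map_sum]
          rw [pow_succ', hW, polyNormSq, Finset.sum_mul]
          simp only [sq, mul_assoc]
      _ = _ := by simp only [gaussExpect_numberOp_mul, ← map_sum]; rw [Finset.sum_comm]
  have derivative (i : ι) : ∑ j, pderiv i (V j) * pderiv i (V j * W ^ k)
      = (∑ j, pderiv i (V j) ^ 2) * W ^ k
        + (2 * k : ℝ) • ((∑ j, V j * pderiv i (V j)) ^ 2 * W ^ (k - 1)) := by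
    have term (j : κ) : pderiv i (V j) * pderiv i (V j * W ^ k) = pderiv i (V j) ^ 2 * W ^ k
        + V j * pderiv i (V j) * (2 * k * (∑ j, V j * pderiv i (V j)) * W ^ (k - 1)) := by
      rw [pderiv_mul, pderiv_pow, pderiv_polyNormSq]; ring
    simp only [term, Finset.sum_add_distrib, ← Finset.sum_mul]
    rw [smul_eq_C_mul, map_mul, map_ofNat, map_natCast]
    ring
  have hJ (x : ι → ℝ) :
      eval x (polyNormSq (polyJacobian V)) = ∑ i, ∑ j, eval x (pderiv i (V j)) ^ 2 := by
    rw [Finset.sum_comm, polyNormSq_polyJacobian]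
    simp only [carreDuChamp, map_sum, map_pow]
  rw [parts, ← smul_eq_mul, ← map_smul]
  refine gaussExpect_mono fun x => ?_
  simp only [derivative, map_sum, map_add, map_mul, map_pow, smul_eval, hJ]
  rw [Finset.sum_mul, Finset.mul_sum]
  exact Finset.sum_le_sum fun i _ => by
    simpa [hW, polyNormSq] using
      sum_sq_mul_pow_add_le (fun j => eval x (V j)) (fun j => eval x (pderiv i (V j))) k

lemma mul_mul_pow_le_half_pow_succ_add {b w c : ℝ} (hb : 0 ≤ b) (hw : 0 ≤ w) (hc : 0 ≤ c) (k : ℕ) :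
    c * (b * w ^ k) ≤ 1 / 2 * w ^ (k + 1) + (2 * c) ^ (k + 1) * b ^ (k + 1) := by
  have hcb : 0 ≤ c * b := mul_nonneg hc hb
  rw [← mul_pow]
  rcases le_total (2 * c * b) w with h | h
  · have := mul_le_mul_of_nonneg_right h (pow_nonneg hw k)
    rw [pow_succ']
    nlinarith [pow_nonneg (mul_nonneg (mul_nonneg two_pos.le hc) hb) (k + 1)]
  · have := mul_le_mul_of_nonneg_left (pow_le_pow_left₀ hw h k) hcb
    rw [pow_succ' (2 * c * b)]
    nlinarith [pow_nonneg hw (k + 1), mul_nonneg hcb (pow_nonneg (hw.trans h) k)]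

lemma gaussExpect_polyNormSq_pow_le_polyJacobian {m : ℝ} (hm : 1 ≤ m) {V : κ → MvPolynomial ι ℝ}
    (hV : ∀ j, numberOp (V j) = m • V j) (k : ℕ) :
    gaussExpect (polyNormSq V ^ (k + 1))
      ≤ 2 * (2 * (2 * k + 1)) ^ (k + 1) * gaussExpect (polyNormSq (polyJacobian V) ^ (k + 1)) := by
  set W := polyNormSq V
  set J := polyNormSq (polyJacobian V)
  have young : (2 * k + 1) * gaussExpect (J * W ^ k) ≤ 1 / 2 * gaussExpect (W ^ (k + 1))
      + (2 * (2 * k + 1)) ^ (k + 1) * gaussExpect (J ^ (k + 1)) := by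
    have h : gaussExpect ((2 * k + 1 : ℝ) • (J * W ^ k)) ≤ gaussExpect
        ((1 / 2 : ℝ) • W ^ (k + 1) + ((2 * (2 * k + 1)) ^ (k + 1) : ℝ) • J ^ (k + 1)) :=
      gaussExpect_mono fun x => by
        simp only [smul_eval, map_add, map_mul, map_pow]
        exact mul_mul_pow_le_half_pow_succ_add (eval_polyNormSq_nonneg _ x)
          (eval_polyNormSq_nonneg _ x) (by positivity) k
    simpa only [map_add, map_smul, smul_eq_mul] using h
  have hW : 0 ≤ gaussExpect (W ^ (k + 1)) := gaussExpect_nonneg fun x => by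
    rw [map_pow]; exact pow_nonneg (eval_polyNormSq_nonneg _ x) _
  have := gaussExpect_polyNormSq_pow_succ_le hV k
  nlinarith

-- Differentiating `m` times reaches constants: the induction passes from `V` to its Jacobian.
theorem exists_gaussExpect_polyNormSq_pow_le (m k : ℕ) : ∃ A : ℝ, 0 < A ∧
    ∀ (ι κ : Type) [Fintype ι] [Fintype κ] (V : κ → MvPolynomial ι ℝ),
      (∀ j, numberOp (V j) = (m : ℝ) • V j) → (∀ j, (V j).totalDegree ≤ m) →
      gaussExpect (polyNormSq V ^ (k + 1)) ≤ A * gaussExpect (polyNormSq V) ^ (k + 1) := by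
  induction m with
  | zero =>
    refine ⟨1, one_pos, fun ι κ _ _ V _ hdeg => ?_⟩
    have hconst : polyNormSq V = C (∑ j, coeff 0 (V j) ^ 2) := by
      simp only [polyNormSq, map_sum, map_pow]
      exact Finset.sum_congr rfl fun j _ => by
        rw [← totalDegree_eq_zero_iff_eq_C.1 (Nat.le_zero.1 (hdeg j))]
    rw [hconst, ← map_pow, gaussExpect_C, gaussExpect_C, one_mul]
  | succ m ih =>
    obtain ⟨A, hA, ih⟩ := ih
    refine ⟨2 * (2 * (2 * k + 1)) ^ (k + 1) * A * (m + 1) ^ (k + 1), by positivity,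
      fun ι κ _ _ V hV hdeg => ?_⟩
    have hJ := ih ι (κ × ι) (polyJacobian V) (fun ji => numberOp_pderiv (hV ji.1) ji.2)
      fun ji => (totalDegree_pderiv_le _ _).trans (Nat.sub_le_of_le_add (hdeg ji.1))
    rw [gaussExpect_polyNormSq_polyJacobian hV] at hJ
    calc gaussExpect (polyNormSq V ^ (k + 1))
        ≤ 2 * (2 * (2 * k + 1)) ^ (k + 1)
            * gaussExpect (polyNormSq (polyJacobian V) ^ (k + 1)) :=
          gaussExpect_polyNormSq_pow_le_polyJacobian (by simp) hV k
      _ ≤ 2 * (2 * (2 * k + 1)) ^ (k + 1)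
            * (A * (((m + 1 : ℕ) : ℝ) * gaussExpect (polyNormSq V)) ^ (k + 1)) := by gcongr
      _ = _ := by rw [mul_pow _ (gaussExpect _)]; push_cast; ring

end Hypercontractivity

lemma cast_descFactorial_succ {R : Type*} [CommRing R] (m k : ℕ) :
    (m.descFactorial (k + 1) : R) = (m - k) * m.descFactorial k := by
  rw [Nat.descFactorial_succ, Nat.cast_mul]
  rcases le_or_gt k m with h | h
  · rw [Nat.cast_sub h]
  · simp [Nat.descFactorial_of_lt h]

lemma notMem_and_nodup_of_nodup_cons_cons {α : Type*} {o a : α} {l : List α}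
    (h : (o :: a :: l).Nodup) : a ∉ o :: l ∧ (o :: l).Nodup :=
  List.nodup_cons.1 ((List.Perm.swap a o l).nodup_iff.1 h)

lemma nodup_cons_erase {α : Type*} [DecidableEq α] {o : α} {l : List α} (h : (o :: l).Nodup)
    (b : α) : (o :: l.erase b).Nodup :=
  h.sublist (List.erase_sublist.cons_cons o)

section Polarization

variable {β σ : Type} [Fintype σ] {o a b : β} {l : List β}

/-- The polarised derivative of a polynomial: `polarize o [b₁, …, bₖ] p` is the `k`-th derivative
of `p` at the block `o` of variables, contracted with the blocks `b₁, …, bₖ`. -/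
noncomputable def polarize (o : β) : List β → MvPolynomial σ ℝ →ₗ[ℝ] MvPolynomial (β × σ) ℝ
  | [] => (rename (Prod.mk o)).toLinearMap
  | a :: l => ∑ j, LinearMap.mulLeft ℝ (X (a, j)) ∘ₗ polarize o l ∘ₗ (pderiv j).toLinearMap

lemma polarize_nil (p : MvPolynomial σ ℝ) : polarize o [] p = rename (Prod.mk o) p := rfl

lemma polarize_cons (p : MvPolynomial σ ℝ) :
    polarize o (a :: l) p = ∑ j, X (a, j) * polarize o l (pderiv j p) := by
  simp [polarize]

lemma totalDegree_polarize_le (p : MvPolynomial σ ℝ) :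
    (polarize o l p).totalDegree ≤ p.totalDegree := by
  induction l generalizing p with
  | nil => exact totalDegree_rename_le _ p
  | cons a l ih =>
    rw [polarize_cons]
    refine totalDegree_finsetSum_le fun j _ => ?_
    rcases Nat.eq_zero_or_pos p.totalDegree with h | h
    · simp [pderiv_eq_zero_of_totalDegree_eq_zero h]
    · have hX : (X (a, j) : MvPolynomial (β × σ) ℝ).totalDegree = 1 := totalDegree_X _
      have := (ih (pderiv j p)).trans (totalDegree_pderiv_le j p)
      exact (totalDegree_mul _ _).trans (by omega)

lemma pderiv_polarize_base (ho : o ∉ l) (j : σ) (p : MvPolynomial σ ℝ) :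
    pderiv (o, j) (polarize o l p) = polarize o l (pderiv j p) := by
  classical
  induction l generalizing p with
  | nil => exact pderiv_rename (Prod.mk_right_injective o) j p
  | cons a l ih =>
    obtain ⟨hoa, hol⟩ := List.ne_and_not_mem_of_not_mem_cons ho
    simp only [polarize_cons, map_sum, pderiv_X_mul, ih hol, pderiv_pderiv_comm j,
      Prod.mk.injEq, hoa, false_and, if_false, add_zero]

lemma pderiv_polarize_of_notMem (hb : b ∉ o :: l) (j : σ) (p : MvPolynomial σ ℝ) :
    pderiv (b, j) (polarize o l p) = 0 := by
  classical
  induction l generalizing p with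
  | nil =>
    refine pderiv_rename_of_notMem_range ?_ p
    rintro ⟨i, h⟩
    exact List.ne_of_not_mem_cons hb (congrArg Prod.fst h).symm
  | cons a l ih =>
    simp only [List.mem_cons, not_or] at hb ih
    simp only [polarize_cons, map_sum, pderiv_X_mul, ih ⟨hb.1, hb.2.2⟩, mul_zero,
      Prod.mk.injEq, hb.2.1, false_and, if_false, add_zero, Finset.sum_const_zero]

lemma pderiv_polarize_cons (ha : a ∉ o :: l) (j : σ) (p : MvPolynomial σ ℝ) :
    pderiv (a, j) (polarize o (a :: l) p) = polarize o l (pderiv j p) := by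
  classical
  simp only [polarize_cons, map_sum, pderiv_X_mul, pderiv_polarize_of_notMem ha, mul_zero, zero_add,
    Prod.mk.injEq, true_and, Finset.sum_ite_eq, Finset.mem_univ, if_true]

lemma pderiv_polarize_of_mem [DecidableEq β] (hl : (o :: l).Nodup) (hb : b ∈ l) (j : σ)
    (p : MvPolynomial σ ℝ) :
    pderiv (b, j) (polarize o l p) = polarize o (l.erase b) (pderiv j p) := by
  classical
  induction l generalizing p with
  | nil => simp at hb
  | cons a l ih =>
    obtain ⟨ha, hol⟩ := notMem_and_nodup_of_nodup_cons_cons hl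
    rcases eq_or_ne b a with rfl | hba
    · rw [pderiv_polarize_cons ha, List.erase_cons_head]
    · rw [List.erase_cons_tail (by simpa using hba.symm)]
      simp only [polarize_cons, map_sum, pderiv_X_mul, ih hol (List.mem_of_ne_of_mem hba hb),
        pderiv_pderiv_comm j, Prod.mk.injEq, hba, false_and, if_false, add_zero]

/-- The squared gradient of `polarize o l p` in the base block `o` of variables. -/
noncomputable def baseGradSq (o : β) (l : List β) (p : MvPolynomial σ ℝ) :
    MvPolynomial (β × σ) ℝ :=
  ∑ j, polarize o l (pderiv j p) ^ 2

lemma pderiv_baseGradSq_of_notMem (hb : b ∉ o :: l) (j : σ) (p : MvPolynomial σ ℝ) :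
    pderiv (b, j) (baseGradSq o l p) = 0 := by
  simp only [baseGradSq, map_sum, pderiv_sq, pderiv_polarize_of_notMem hb, mul_zero,
    Finset.sum_const_zero]

variable [Fintype β]

lemma carreDuChamp_polarize [DecidableEq β] (hl : (o :: l).Nodup) (p : MvPolynomial σ ℝ) :
    carreDuChamp (polarize o l p) = baseGradSq o l p + ∑ b ∈ l.toFinset,
      baseGradSq o (l.erase b) p := by
  have block (b : β) : ∑ j, pderiv (b, j) (polarize o l p) ^ 2
      = (if b = o then baseGradSq o l p else 0)
        + if b ∈ l.toFinset then baseGradSq o (l.erase b) p else 0 := by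
    simp only [List.mem_toFinset]
    by_cases hbo : b = o
    · subst hbo
      have hb := (List.nodup_cons.1 hl).1
      simp only [pderiv_polarize_base hb, if_true, if_neg hb, add_zero, baseGradSq]
    by_cases hbl : b ∈ l
    · simp only [pderiv_polarize_of_mem hl hbl, if_neg hbo, if_pos hbl, zero_add, baseGradSq]
    · have hb : b ∉ o :: l := by simp [hbo, hbl]
      simp [pderiv_polarize_of_notMem hb, hbo, hbl]
  rw [carreDuChamp, Fintype.sum_prod_type]
  simp only [block, Finset.sum_add_distrib, Finset.sum_ite_eq', Finset.sum_ite_mem,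
    Finset.mem_univ, if_true, Finset.univ_inter]

lemma numberOp_polarize (hl : (o :: l).Nodup) (p : MvPolynomial σ ℝ) :
    numberOp (polarize o l p) = polarize o l (numberOp p) := by
  induction l generalizing p with
  | nil =>
    rw [numberOp_apply, Fintype.sum_prod_type, Finset.sum_eq_single_of_mem o (Finset.mem_univ o)]
    · simp only [pderiv_polarize_base List.not_mem_nil]
      simp only [numberOp_apply, polarize_nil, map_sum, map_sub, map_mul, rename_X]
    · intro b _ hb
      have hb : b ∉ [o] := by simpa using hb
      simp [pderiv_polarize_of_notMem hb]
  | cons a l ih =>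
    obtain ⟨ha, hol⟩ := notMem_and_nodup_of_nodup_cons_cons hl
    simp only [polarize_cons, map_sum, numberOp_X_mul, pderiv_polarize_of_notMem ha, ih hol,
      pderiv_numberOp, map_add, mul_zero, sub_zero, mul_add]

lemma numberOp_polarize_of_eigen (hl : (o :: l).Nodup) {m : ℝ} {p : MvPolynomial σ ℝ}
    (hp : numberOp p = m • p) : numberOp (polarize o l p) = m • polarize o l p := by
  rw [numberOp_polarize hl, hp, map_smul]

lemma gaussExpect_polarize_cons_mul (ha : a ∉ o :: l) (p : MvPolynomial σ ℝ)
    (q : MvPolynomial (β × σ) ℝ) :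
    gaussExpect (polarize o (a :: l) p * q)
      = ∑ j, gaussExpect (polarize o l (pderiv j p) * pderiv (a, j) q) := by
  simp only [polarize_cons, Finset.sum_mul, map_sum, mul_assoc, gaussExpect_X_mul, pderiv_mul,
    pderiv_polarize_of_notMem ha, zero_mul, zero_add]

lemma gaussExpect_polarize_cons_sq (ha : a ∉ o :: l) (p : MvPolynomial σ ℝ) :
    gaussExpect (polarize o (a :: l) p ^ 2) = gaussExpect (baseGradSq o l p) := by
  simp only [sq, gaussExpect_polarize_cons_mul ha, pderiv_polarize_cons ha, baseGradSq, map_sum]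

-- Conditionally on the other blocks, `polarize o (a :: l) p` is a centred Gaussian of variance
-- `baseGradSq o l p`.
lemma gaussExpect_polarize_cons_pow_four (ha : a ∉ o :: l) (p : MvPolynomial σ ℝ) :
    gaussExpect (polarize o (a :: l) p ^ 4) = 3 * gaussExpect (baseGradSq o l p ^ 2) := by
  set G := polarize o (a :: l) p with hG
  set T := baseGradSq o l p with hT
  have hGT : gaussExpect (G * (G * T)) = gaussExpect (T ^ 2) := by
    rw [hG, gaussExpect_polarize_cons_mul ha]
    simp only [pderiv_mul, pderiv_polarize_cons ha, hT, pderiv_baseGradSq_of_notMem ha, mul_zero,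
      add_zero, ← mul_assoc, ← sq]
    rw [← map_sum, ← Finset.sum_mul, ← baseGradSq, sq]
  calc gaussExpect (G ^ 4) = gaussExpect (G * G ^ 3) := by rw [← pow_succ']
    _ = gaussExpect ((3 : ℝ) • (G * (G * T))) := by
        rw [hG, gaussExpect_polarize_cons_mul ha, ← hG, ← map_sum, hT, baseGradSq]
        simp only [hG, pderiv_pow, pderiv_polarize_cons ha, Finset.mul_sum, Finset.smul_sum,
          smul_eq_C_mul, map_ofNat, Nat.cast_ofNat]
        exact congrArg _ (Finset.sum_congr rfl fun j _ => by ring)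
    _ = 3 * gaussExpect (T ^ 2) := by rw [map_smul, hGT, smul_eq_mul]

lemma fourthCumulant_polarize_cons (ha : a ∉ o :: l) (p : MvPolynomial σ ℝ) :
    fourthCumulant (polarize o (a :: l) p) = 3 * gaussVar (baseGradSq o l p) := by
  rw [fourthCumulant, gaussVar, gaussExpect_polarize_cons_pow_four ha,
    gaussExpect_polarize_cons_sq ha]
  ring

lemma gaussExpect_baseGradSq_add_sum [DecidableEq β] (hl : (o :: l).Nodup) {m : ℝ}
    {p : MvPolynomial σ ℝ} (hp : numberOp p = m • p) :
    gaussExpect (baseGradSq o l p) + ∑ b ∈ l.toFinset, gaussExpect (baseGradSq o (l.erase b) p)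
      = m * gaussExpect (polarize o l p ^ 2) := by
  rw [← gaussExpect_carreDuChamp_of_eigen (numberOp_polarize_of_eigen hl hp),
    carreDuChamp_polarize hl, map_add, map_sum]

theorem gaussExpect_baseGradSq {m : ℕ} {p : MvPolynomial σ ℝ} (hp : numberOp p = (m : ℝ) • p)
    (hl : (o :: l).Nodup) :
    gaussExpect (baseGradSq o l p) = m.descFactorial (l.length + 1) * gaussExpect (p ^ 2) := by
  classical
  induction hk : l.length generalizing l with
  | zero =>
    obtain rfl := List.length_eq_zero_iff.1 hk
    have h := gaussExpect_baseGradSq_add_sum hl hp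
    rw [polarize_nil, ← map_pow, gaussExpect_rename (Prod.mk_right_injective o)] at h
    simpa using h
  | succ k ih =>
    have lower {b : β} (hb : b ∈ l.toFinset) : gaussExpect (baseGradSq o (l.erase b) p)
        = m.descFactorial (k + 1) * gaussExpect (p ^ 2) :=
      ih (nodup_cons_erase hl b) (by
        rw [List.length_erase_of_mem (List.mem_toFinset.1 hb), hk, Nat.add_sub_cancel])
    have hsum := gaussExpect_baseGradSq_add_sum hl hp
    rw [Finset.sum_congr rfl fun b hb => lower hb, Finset.sum_const,
      List.toFinset_card_of_nodup (List.nodup_cons.1 hl).2, hk, nsmul_eq_mul] at hsum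
    have hsq : gaussExpect (polarize o l p ^ 2)
        = m.descFactorial (k + 1) * gaussExpect (p ^ 2) := by
      obtain ⟨a, l, rfl⟩ := List.exists_cons_of_length_eq_add_one hk
      obtain ⟨ha, hol⟩ := notMem_and_nodup_of_nodup_cons_cons hl
      rw [gaussExpect_polarize_cons_sq ha, ih hol (Nat.succ.inj hk)]
    rw [hsq] at hsum
    rw [cast_descFactorial_succ]
    linear_combination hsum

lemma gaussVar_baseGradSq_le_add_sum [DecidableEq β] (hl : (o :: l).Nodup) {m : ℕ}
    {p : MvPolynomial σ ℝ} (hp : numberOp p = (m : ℝ) • p) (hdeg : p.totalDegree ≤ m) :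
    gaussVar (baseGradSq o l p) ≤ 2 * (m ^ 2 / 3 * fourthCumulant (polarize o l p))
      + 2 * (l.length * ∑ b ∈ l.toFinset, gaussVar (baseGradSq o (l.erase b) p)) := by
  have hsum := gaussVar_sum_le l.toFinset fun b => baseGradSq o (l.erase b) p
  have hΓ := gaussVar_carreDuChamp_le (numberOp_polarize_of_eigen hl hp)
    ((totalDegree_polarize_le p).trans hdeg)
  have hsub := gaussVar_sub_le (carreDuChamp (polarize o l p))
    (∑ b ∈ l.toFinset, baseGradSq o (l.erase b) p)
  rw [List.toFinset_card_of_nodup (List.nodup_cons.1 hl).2] at hsum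
  rw [carreDuChamp_polarize hl] at hΓ hsub
  rw [add_sub_cancel_right] at hsub
  linarith

theorem exists_gaussVar_baseGradSq_le (m k : ℕ) : ∃ A : ℝ, 0 ≤ A ∧
    ∀ (β σ : Type) [Fintype β] [Fintype σ] (o : β) (p : MvPolynomial σ ℝ),
      numberOp p = (m : ℝ) • p → p.totalDegree ≤ m → ∀ l : List β, l.length = k → (o :: l).Nodup →
      gaussVar (baseGradSq o l p) ≤ A * fourthCumulant p := by
  classical
  induction k with
  | zero =>
    refine ⟨2 * (m ^ 2 / 3), by positivity, fun β σ _ _ o p hp hdeg l hk hl => ?_⟩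
    obtain rfl := List.length_eq_zero_iff.1 hk
    have h := gaussVar_baseGradSq_le_add_sum hl hp hdeg
    rw [polarize_nil, fourthCumulant_rename (Prod.mk_right_injective o)] at h
    simpa [mul_assoc] using h
  | succ k ih =>
    obtain ⟨A, hA, ih⟩ := ih
    refine ⟨2 * m ^ 2 * A + 2 * (k + 1) * ((k + 1) * A), by positivity,
      fun β σ _ _ o p hp hdeg l hk hl => ?_⟩
    have h := gaussVar_baseGradSq_le_add_sum hl hp hdeg
    have cumulant : fourthCumulant (polarize o l p) ≤ 3 * (A * fourthCumulant p) := by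
      obtain ⟨a, l, rfl⟩ := List.exists_cons_of_length_eq_add_one hk
      obtain ⟨ha, hol⟩ := notMem_and_nodup_of_nodup_cons_cons hl
      rw [fourthCumulant_polarize_cons ha]
      linarith [ih β σ o p hp hdeg l (Nat.succ.inj hk) hol]
    have sum_le : ∑ b ∈ l.toFinset, gaussVar (baseGradSq o (l.erase b) p)
        ≤ (k + 1) * (A * fourthCumulant p) := by
      have := Finset.sum_le_card_nsmul l.toFinset _ _ fun b hb => ih β σ o p hp hdeg (l.erase b)
        (by rw [List.length_erase_of_mem (List.mem_toFinset.1 hb), hk, Nat.add_sub_cancel])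
        (nodup_cons_erase hl b)
      rwa [List.toFinset_card_of_nodup (List.nodup_cons.1 hl).2, hk, nsmul_eq_mul,
        Nat.cast_succ] at this
    rw [hk, Nat.cast_succ] at h
    calc gaussVar (baseGradSq o l p)
        ≤ 2 * (m ^ 2 / 3 * (3 * (A * fourthCumulant p)))
          + 2 * ((k + 1) * ((k + 1) * (A * fourthCumulant p))) := h.trans (by gcongr)
      _ = _ := by ring

end Polarization

section Hermite

lemma derivative_hermite_succ (n : ℕ) :
    (Polynomial.hermite (n + 1)).derivative = (n + 1) * Polynomial.hermite n := by
  induction n with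
  | zero => simp
  | succ n ih =>
    have h : ((n : Polynomial ℤ) + 1).derivative = 0 := by simp
    rw [Polynomial.hermite_succ (n + 1), map_sub, Polynomial.derivative_mul,
      Polynomial.derivative_X, ih, Polynomial.derivative_mul, h, Polynomial.hermite_succ n]
    push_cast
    ring

lemma X_mul_derivative_hermite_sub (n : ℕ) :
    Polynomial.X * (Polynomial.hermite n).derivative - (Polynomial.hermite n).derivative.derivative
      = (n : Polynomial ℤ) * Polynomial.hermite n := by
  rcases n with _ | n
  · simp
  · have h : ((n : Polynomial ℤ) + 1).derivative = 0 := by simp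
    rw [derivative_hermite_succ, Polynomial.derivative_mul, h, Polynomial.hermite_succ n]
    push_cast
    ring

lemma pderiv_aeval {σ S R : Type*} [CommSemiring S] [CommSemiring R] [Algebra S R] (i : σ)
    (q : MvPolynomial σ R) (h : Polynomial S) :
    pderiv i (Polynomial.aeval q h) = Polynomial.aeval q h.derivative * pderiv i q :=
  Derivation.map_aeval ((pderiv i).restrictScalars S) h q

lemma totalDegree_aeval_X_le {σ S R : Type*} [CommSemiring S] [CommSemiring R] [Algebra S R]
    (i : σ) (h : Polynomial S) :
    (Polynomial.aeval (X i : MvPolynomial σ R) h).totalDegree ≤ h.natDegree := by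
  rw [Polynomial.aeval_eq_sum_range]
  refine totalDegree_finsetSum_le fun k hk => ?_
  have hk := Nat.le_of_lt_succ (Finset.mem_range.1 hk)
  rw [← algebraMap_smul R]
  refine (totalDegree_smul_le _ _).trans (le_trans ?_ hk)
  rw [X_pow_eq_monomial]
  exact (totalDegree_monomial_le _ _).trans (by simp)

variable {K m : ℕ}

lemma numberOp_hermiteProd (k : Fin K → ℕ) :
    numberOp (hermiteProd k) = ((∑ i, k i : ℕ) : ℝ) • hermiteProd k := by
  classical
  have factor (i : Fin K) : X i * pderiv i (hermiteProd k) - pderiv i (pderiv i (hermiteProd k))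
      = (k i : MvPolynomial (Fin K) ℝ) * hermiteProd k := by
    rw [hermiteProd, ← Finset.mul_prod_erase _ _ (Finset.mem_univ i)]
    set rest := ∏ j ∈ Finset.univ.erase i,
      Polynomial.aeval (X j : MvPolynomial (Fin K) ℝ) (Polynomial.hermite (k j))
    have hrest : pderiv i rest = 0 :=
      Finset.prod_induction _ (fun f => pderiv i f = 0)
        (fun f g hf hg => by rw [pderiv_mul, hf, hg, zero_mul, mul_zero, add_zero]) pderiv_one
        fun j hj => by
          rw [pderiv_aeval (R := ℝ), pderiv_X_of_ne (Finset.ne_of_mem_erase hj), mul_zero]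
    have ode := congrArg (Polynomial.aeval (X i : MvPolynomial (Fin K) ℝ))
      (X_mul_derivative_hermite_sub (k i))
    simp only [map_sub, map_mul, Polynomial.aeval_X, map_natCast] at ode
    simp only [pderiv_mul, pderiv_aeval, hrest, pderiv_X_self, mul_zero, add_zero, mul_one]
    linear_combination rest * ode
  rw [numberOp_apply, Finset.sum_congr rfl fun i _ => factor i, ← Finset.sum_mul, smul_eq_C_mul,
    Nat.cast_sum, map_sum]
  simp only [map_natCast]

lemma totalDegree_hermiteProd_le (k : Fin K → ℕ) : (hermiteProd k).totalDegree ≤ ∑ i, k i :=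
  (totalDegree_finsetProd _ _).trans <| Finset.sum_le_sum fun i _ =>
    (totalDegree_aeval_X_le i _).trans_eq Polynomial.natDegree_hermite

lemma numberOp_of_mem_chaos {Q : MvPolynomial (Fin K) ℝ} (hQ : Q ∈ chaos K m) :
    numberOp Q = (m : ℝ) • Q := by
  have h : chaos K m ≤ LinearMap.ker (numberOp - (m : ℝ) • LinearMap.id) := by
    rw [chaos, Submodule.span_le]
    rintro _ ⟨k, hk, rfl⟩
    simp [numberOp_hermiteProd, ← hk]
  simpa [sub_eq_zero] using h hQ

lemma totalDegree_le_of_mem_chaos {Q : MvPolynomial (Fin K) ℝ} (hQ : Q ∈ chaos K m) :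
    Q.totalDegree ≤ m := by
  have h : chaos K m ≤ restrictTotalDegree (Fin K) ℝ m := by
    rw [chaos, Submodule.span_le]
    rintro _ ⟨k, hk, rfl⟩
    exact (mem_restrictTotalDegree ..).2 ((totalDegree_hermiteProd_le k).trans_eq hk)
  exact (mem_restrictTotalDegree ..).1 (h hQ)

end Hermite

section ConvergenceOfMoments

variable {E : Type} [MeasurableSpace E]

lemma integral_sub_integral_min_mem_Icc {ν : Measure E} [IsFiniteMeasure ν] {g : E → ℝ}
    (hg : MemLp g 2 ν) {R : ℝ} (hR : 0 < R) :
    ∫ x, g x ∂ν - ∫ x, min (g x) R ∂ν ∈ Set.Icc 0 ((∫ x, g x ^ 2 ∂ν) / R) := by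
  have hgi : Integrable g ν := hg.integrable one_le_two
  have hmin : Integrable (fun x => min (g x) R) ν := hgi.inf (integrable_const R)
  rw [← integral_sub hgi hmin, ← integral_div]
  refine ⟨integral_nonneg fun x => sub_nonneg.2 (min_le_left _ _),
    integral_mono (hgi.sub hmin) (hg.integrable_sq.div_const R) fun x => ?_⟩
  rcases le_total (g x) R with h | h
  · simp only [min_eq_left h, sub_self]; positivity
  · simp only [min_eq_right h, le_div_iff₀ hR]; nlinarith

variable [TopologicalSpace E]

lemma tendsto_integral_of_tendstoInLaw {μs : ℕ → Measure E} {μ : Measure E}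
    [∀ n, IsFiniteMeasure (μs n)] [IsFiniteMeasure μ] (h : TendstoInLaw μs μ) {g : E → ℝ}
    (hgc : Continuous g) (hg0 : 0 ≤ g) (hμs : ∀ n, MemLp g 2 (μs n)) (hμ : MemLp g 2 μ) {B : ℝ}
    (hB : ∀ᶠ n in atTop, ∫ x, g x ^ 2 ∂μs n ≤ B) :
    Tendsto (fun n => ∫ x, g x ∂μs n) atTop (𝓝 (∫ x, g x ∂μ)) := by
  set M := max B (∫ x, g x ^ 2 ∂μ)
  have : 0 ≤ M := (integral_nonneg fun x => sq_nonneg (g x)).trans (le_max_right _ _)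
  rw [Metric.tendsto_nhds]
  intro ε hε
  set R := 2 * (M + 1) / ε with hR
  have hR0 : 0 < R := by positivity
  have hMR : M / R < ε / 2 := by
    rw [hR, div_div_eq_mul_div, div_lt_div_iff₀ (by positivity) two_pos]
    nlinarith
  let f : BoundedContinuousFunction E ℝ := .ofNormedAddCommGroup (fun x => min (g x) R)
    (by fun_prop) R fun x => by
      rw [Real.norm_eq_abs, abs_of_nonneg (le_min (hg0 x) hR0.le)]; exact min_le_right _ _
  filter_upwards [(h f).eventually (Metric.ball_mem_nhds _ (half_pos hε)), hB] with n hfn hBn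
  have hn := integral_sub_integral_min_mem_Icc (hμs n) hR0
  have hlim := integral_sub_integral_min_mem_Icc hμ hR0
  have hn' : (∫ x, g x ^ 2 ∂μs n) / R ≤ M / R := by gcongr; exact hBn.trans (le_max_left _ _)
  have hlim' : (∫ x, g x ^ 2 ∂μ) / R ≤ M / R := by gcongr; exact le_max_right _ _
  change |∫ x, min (g x) R ∂μs n - ∫ x, min (g x) R ∂μ| < ε / 2 at hfn
  rw [Set.mem_Icc] at hn hlim
  rw [abs_lt] at hfn
  rw [Real.dist_eq, abs_lt]
  constructor <;> linarith

lemma sq_le_add_add_min {R l : ℝ} (hR : 0 < R) (hl : 0 < l) (x : ℝ) :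
    x ^ 2 ≤ R + l / 2 * x ^ 4 + 1 / (2 * l) * min (x ^ 2 / R) 1 := by
  rcases le_total (x ^ 2) R with hx | hx
  · have : 0 ≤ l / 2 * x ^ 4 + 1 / (2 * l) * min (x ^ 2 / R) 1 := by positivity
    linarith
  · have : l / 2 * x ^ 4 + 1 / (2 * l) - x ^ 2 = (l * x ^ 2 - 1) ^ 2 / (2 * l) := by
      field_simp; ring
    have : 0 ≤ (l * x ^ 2 - 1) ^ 2 / (2 * l) := by positivity
    rw [min_eq_right ((one_le_div hR).2 hx), mul_one]
    linarith

-- A fourth moment controlled by the square of the second forbids mass from escaping to infinity.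
lemma integral_sq_le_of_integral_min_le {ν : Measure ℝ} [IsProbabilityMeasure ν]
    (hi : ∀ k : ℕ, Integrable (fun x => x ^ k) ν) {A R : ℝ} (hA : 0 < A) (hR : 0 < R)
    (h4 : ∫ x, x ^ 4 ∂ν ≤ A * (∫ x, x ^ 2 ∂ν) ^ 2)
    (hmin : ∫ x, min (x ^ 2 / R) 1 ∂ν ≤ 1 / (4 * A)) : ∫ x, x ^ 2 ∂ν ≤ 3 * R := by
  set a := ∫ x, x ^ 2 ∂ν
  have ha : 0 ≤ a := integral_nonneg fun x => sq_nonneg x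
  rcases ha.eq_or_lt with h0 | hpos
  · rw [← h0]; positivity
  set l := 1 / (2 * A * a) with hl
  have hl0 : 0 < l := by positivity
  have imin : Integrable (fun x : ℝ => min (x ^ 2 / R) 1) ν :=
    ((hi 2).div_const R).inf (integrable_const 1)
  have i4 := (integrable_const R).add ((hi 4).const_mul (l / 2))
  have hmono := integral_mono (hi 2) (i4.add (imin.const_mul (1 / (2 * l))))
    (sq_le_add_add_min hR hl0)
  rw [integral_add' i4 (imin.const_mul _), integral_add' (integrable_const R) ((hi 4).const_mul _),
    integral_const_mul, integral_const_mul, integral_const, probReal_univ, one_smul] at hmono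
  have fourth : l / 2 * ∫ x, x ^ 4 ∂ν ≤ a / 4 := by
    calc l / 2 * ∫ x, x ^ 4 ∂ν ≤ l / 2 * (A * a ^ 2) := by gcongr
      _ = a / 4 := by rw [hl]; field_simp; ring
  have tail : 1 / (2 * l) * ∫ x, min (x ^ 2 / R) 1 ∂ν ≤ a / 4 := by
    calc 1 / (2 * l) * ∫ x, min (x ^ 2 / R) 1 ∂ν ≤ 1 / (2 * l) * (1 / (4 * A)) := by gcongr
      _ = a / 4 := by rw [hl]; field_simp
  linarith

variable {μs : ℕ → Measure ℝ} {μ : Measure ℝ} [∀ n, IsProbabilityMeasure (μs n)]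
  [IsProbabilityMeasure μ]

lemma exists_eventually_integral_sq_le (h : TendstoInLaw μs μ)
    (hμs : ∀ n (k : ℕ), Integrable (fun x => x ^ k) (μs n)) (hμ : Integrable (fun x => x ^ 2) μ)
    {A : ℝ} (hA : 0 < A) (h4 : ∀ n, ∫ x, x ^ 4 ∂μs n ≤ A * (∫ x, x ^ 2 ∂μs n) ^ 2) :
    ∃ B, ∀ᶠ n in atTop, ∫ x, x ^ 2 ∂μs n ≤ B := by
  set v := ∫ x, x ^ 2 ∂μ
  have : 0 ≤ v := integral_nonneg fun x => sq_nonneg x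
  set R := 4 * A * (v + 1) with hR
  have hR0 : 0 < R := by positivity
  let f : BoundedContinuousFunction ℝ ℝ := .ofNormedAddCommGroup (fun x => min (x ^ 2 / R) 1)
    (by fun_prop) 1 fun x => by
      rw [Real.norm_eq_abs, abs_of_nonneg (by positivity)]; exact min_le_right _ _
  have hlt : ∫ x, f x ∂μ < 1 / (4 * A) := by
    calc ∫ x, f x ∂μ ≤ ∫ x, x ^ 2 / R ∂μ :=
          integral_mono (f.integrable _) (hμ.div_const R) fun x => min_le_left _ _
      _ = v / R := integral_div _ _
      _ < 1 / (4 * A) := by rw [hR, div_lt_div_iff₀ hR0 (by positivity)]; nlinarith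
  exact ⟨3 * R, ((h f).eventually (gt_mem_nhds hlt)).mono fun n hn =>
    integral_sq_le_of_integral_min_le (hμs n) hA hR0 (h4 n) hn.le⟩

theorem tendsto_integral_pow_of_tendstoInLaw (h : TendstoInLaw μs μ)
    (hμs : ∀ n (k : ℕ), Integrable (fun x => x ^ k) (μs n))
    (hμ : ∀ k : ℕ, Integrable (fun x => x ^ k) μ)
    (hyper : ∀ k : ℕ, ∃ A, 0 < A ∧
      ∀ n, ∫ x, x ^ (2 * (k + 1)) ∂μs n ≤ A * (∫ x, x ^ 2 ∂μs n) ^ (k + 1)) (k : ℕ) :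
    Tendsto (fun n => ∫ x, x ^ (2 * (k + 1)) ∂μs n) atTop (𝓝 (∫ x, x ^ (2 * (k + 1)) ∂μ)) := by
  obtain ⟨A₄, hA₄, h4⟩ := hyper 1
  obtain ⟨B, hB⟩ := exists_eventually_integral_sq_le h hμs (hμ 2) hA₄ h4
  obtain ⟨A, hA, hk⟩ := hyper (2 * k + 1)
  have hpow (x : ℝ) : (x ^ (2 * (k + 1))) ^ 2 = x ^ (2 * (2 * k + 1 + 1)) := by ring
  have memLp {ν : Measure ℝ} (hν : ∀ j : ℕ, Integrable (fun x => x ^ j) ν) :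
      MemLp (fun x => x ^ (2 * (k + 1))) 2 ν := by
    rw [memLp_two_iff_integrable_sq (by fun_prop)]
    simpa only [hpow] using hν _
  refine tendsto_integral_of_tendstoInLaw h (by fun_prop)
    (fun x => (even_two_mul _).pow_nonneg x) (fun n => memLp (hμs n)) (memLp hμ)
    (B := A * B ^ (2 * k + 1 + 1)) (hB.mono fun n hn => ?_)
  simp only [hpow]
  have : 0 ≤ ∫ x, x ^ 2 ∂μs n := integral_nonneg fun x => sq_nonneg x
  exact (hk n).trans (by gcongr)

end ConvergenceOfMoments

section LaplaceNormSq

/-- The Laplace transform `E[exp (-‖f‖² / 2)]` of half the squared norm of a random vector `f`.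
Its decay along `t • f` as `t → ∞` controls the negative moments of `‖f‖²`. -/
noncomputable def laplaceNormSq {X E : Type*} [MeasurableSpace X] [NormedAddCommGroup E]
    (μ : Measure X) (f : X → E) : ℝ :=
  ∫ x, Real.exp (-‖f x‖ ^ 2 / 2) ∂μ

variable {X Y E : Type*} [MeasurableSpace X] [MeasurableSpace Y] [NormedAddCommGroup E]
  {μ : Measure X} {ν : Measure Y} {f g : X → E}

theorem exp_neg_norm_sq_le_one (a : E) : Real.exp (-‖a‖ ^ 2 / 2) ≤ 1 :=
  Real.exp_le_one_iff.mpr (by linarith [sq_nonneg ‖a‖])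

theorem norm_exp_neg_norm_sq_le_one (a : E) : ‖Real.exp (-‖a‖ ^ 2 / 2)‖ ≤ 1 := by
  rw [Real.norm_of_nonneg (Real.exp_pos _).le]
  exact exp_neg_norm_sq_le_one a

theorem laplaceNormSq_nonneg : 0 ≤ laplaceNormSq μ f :=
  integral_nonneg fun _ => (Real.exp_pos _).le

theorem norm_laplaceNormSq_le_one [IsProbabilityMeasure μ] : ‖laplaceNormSq μ f‖ ≤ 1 := by
  simpa [laplaceNormSq] using norm_integral_le_of_norm_le_const (μ := μ)
    (.of_forall fun x => norm_exp_neg_norm_sq_le_one (f x))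

theorem laplaceNormSq_le_one [IsProbabilityMeasure μ] : laplaceNormSq μ f ≤ 1 :=
  (Real.le_norm_self _).trans norm_laplaceNormSq_le_one

variable [MeasurableSpace E] [BorelSpace E]

theorem integrable_exp_neg_norm_sq [IsFiniteMeasure μ] (hf : Measurable f) :
    Integrable (fun x => Real.exp (-‖f x‖ ^ 2 / 2)) μ :=
  .of_bound (Measurable.aestronglyMeasurable (by fun_prop)) 1
    (.of_forall fun x => norm_exp_neg_norm_sq_le_one (f x))

theorem laplaceNormSq_anti [IsFiniteMeasure μ] (hf : Measurable f) (hg : Measurable g)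
    (h : ∀ x, ‖f x‖ ≤ ‖g x‖) : laplaceNormSq μ g ≤ laplaceNormSq μ f :=
  integral_mono (integrable_exp_neg_norm_sq hg) (integrable_exp_neg_norm_sq hf) fun x =>
    Real.exp_le_exp.mpr (by have := pow_le_pow_left₀ (norm_nonneg _) (h x) 2; linarith)

theorem laplaceNormSq_smul_anti [NormedSpace ℝ E] [IsFiniteMeasure μ] (hf : Measurable f)
    {s t : ℝ} (hst : |s| ≤ |t|) : laplaceNormSq μ (t • f) ≤ laplaceNormSq μ (s • f) :=
  laplaceNormSq_anti (hf.const_smul s) (hf.const_smul t) fun x => by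
    simp only [Pi.smul_apply, norm_smul, Real.norm_eq_abs]
    gcongr

theorem laplaceNormSq_comp {f : Y → E} {T : X → Y} (hT : MeasurePreserving T μ ν)
    (hf : Measurable f) : laplaceNormSq μ (f ∘ T) = laplaceNormSq ν f := by
  rw [laplaceNormSq, laplaceNormSq, ← hT.map_eq,
    integral_map hT.aemeasurable (Measurable.aestronglyMeasurable (by fun_prop))]
  rfl

theorem laplaceNormSq_prod [IsFiniteMeasure μ] [IsFiniteMeasure ν]
    {f : X × Y → E} (hf : Measurable f) :
    laplaceNormSq (μ.prod ν) f = ∫ x, laplaceNormSq ν (fun y => f (x, y)) ∂μ :=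
  integral_prod _ (integrable_exp_neg_norm_sq hf)

theorem measurable_laplaceNormSq_left [SFinite ν] {f : X × Y → E} (hf : Measurable f) :
    Measurable fun x => laplaceNormSq ν fun y => f (x, y) := by
  have : StronglyMeasurable fun z : X × Y => Real.exp (-‖f z‖ ^ 2 / 2) :=
    (Measurable.stronglyMeasurable (by fun_prop))
  exact this.integral_prod_right'.measurable

theorem integrable_laplaceNormSq_left [IsFiniteMeasure μ] [IsProbabilityMeasure ν]
    {f : X × Y → E} (hf : Measurable f) :
    Integrable (fun x => laplaceNormSq ν fun y => f (x, y)) μ :=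
  .of_bound (measurable_laplaceNormSq_left hf).aestronglyMeasurable 1
    (.of_forall fun _ => norm_laplaceNormSq_le_one)

theorem laplaceNormSq_prod_mono_right [IsProbabilityMeasure μ] [IsProbabilityMeasure ν]
    {f g : X × Y → E} (hf : Measurable f) (hg : Measurable g)
    (h : ∀ x, laplaceNormSq ν (fun y => f (x, y)) ≤ laplaceNormSq ν fun y => g (x, y)) :
    laplaceNormSq (μ.prod ν) f ≤ laplaceNormSq (μ.prod ν) g := by
  rw [laplaceNormSq_prod hf, laplaceNormSq_prod hg]
  exact integral_mono (integrable_laplaceNormSq_left hf) (integrable_laplaceNormSq_left hg) h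

theorem laplaceNormSq_prod_mono_left [IsProbabilityMeasure μ] [IsProbabilityMeasure ν]
    {f g : X × Y → E} (hf : Measurable f) (hg : Measurable g)
    (h : ∀ y, laplaceNormSq μ (fun x => f (x, y)) ≤ laplaceNormSq μ fun x => g (x, y)) :
    laplaceNormSq (μ.prod ν) f ≤ laplaceNormSq (μ.prod ν) g := by
  have hswap : MeasurePreserving Prod.swap (ν.prod μ) (μ.prod ν) :=
    Measure.measurePreserving_swap
  rw [← laplaceNormSq_comp hswap hf, ← laplaceNormSq_comp hswap hg]
  exact laplaceNormSq_prod_mono_right (hf.comp measurable_swap) (hg.comp measurable_swap) h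

theorem integral_pow_le_integral_pow_of_mem_Icc [IsProbabilityMeasure μ] {φ : X → ℝ}
    (hφ : Measurable φ) (h : ∀ x, φ x ∈ Set.Icc 0 1) (n : ℕ) :
    (∫ x, φ x ∂μ) ^ n ≤ ∫ x, φ x ^ n ∂μ := by
  refine (convexOn_pow n).map_integral_le (by fun_prop) isClosed_Ici (.of_forall fun x => (h x).1)
    (.of_bound hφ.aestronglyMeasurable 1 (.of_forall fun x => ?_))
    (.of_bound (hφ.pow_const n).aestronglyMeasurable 1 (.of_forall fun x => ?_))
  · simpa [abs_of_nonneg (h x).1] using (h x).2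
  · simpa [abs_of_nonneg (h x).1] using pow_le_one₀ (h x).1 (h x).2

end LaplaceNormSq

section CharFun

variable {X V E : Type*} [MeasurableSpace X] [NormedAddCommGroup V] [NormedSpace ℝ V]
  [MeasurableSpace V] [BorelSpace V] [SecondCountableTopology V] [CompleteSpace V]
  [NormedAddCommGroup E] [InnerProductSpace ℝ E] [MeasurableSpace E] [BorelSpace E]
  {μ : Measure X} {γ : Measure V}

theorem charFun_map_clm_eq_norm [IsGaussian γ] (hγ : ∫ x, x ∂γ = 0) (A : V →L[ℝ] E) (t : E) :
    charFun (γ.map A) t = (‖charFun (γ.map A) t‖ : ℂ) := by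
  set L := (InnerProductSpace.toDualMap ℝ E t).comp A
  have hL : ∫ x, L x ∂γ = 0 := by
    rw [L.integral_comp_id_comm IsGaussian.integrable_id, hγ, map_zero]
  have h : charFun (γ.map A) t = (Real.exp (-(Var[L; γ] / 2)) : ℂ) := by
    rw [charFun_eq_charFunDual_toDualMap, charFunDual_map, IsGaussian.charFunDual_eq,
      integral_complex_ofReal, hL]
    simp [L]
  rw [h, Complex.norm_real, Real.norm_of_nonneg (Real.exp_pos _).le]

variable [FiniteDimensional ℝ E]

theorem integral_charFun_comm (μ ν : Measure E) [IsFiniteMeasure μ] [IsFiniteMeasure ν] :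
    ∫ x, charFun μ x ∂ν = ∫ x, charFun ν x ∂μ := by
  simp_rw [charFun_apply]
  rw [integral_integral_swap]
  · simp_rw [real_inner_comm]
  · refine .of_bound (Continuous.aestronglyMeasurable (by fun_prop)) 1 (.of_forall fun z => ?_)
    simp [Function.uncurry, Complex.norm_exp_ofReal_mul_I]

theorem laplaceNormSq_eq_integral_charFun [IsFiniteMeasure μ] {f : X → E} (hf : Measurable f) :
    (laplaceNormSq μ f : ℂ) = ∫ t, charFun (μ.map f) t ∂stdGaussian E := by
  rw [integral_charFun_comm, integral_map hf.aemeasurable measurable_charFun.aestronglyMeasurable,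
    laplaceNormSq, ← integral_complex_ofReal]
  simp [charFun_stdGaussian]

theorem charFun_map_sub_prod [IsFiniteMeasure μ] {f : X → E} (hf : Measurable f) (t : E) :
    charFun ((μ.prod μ).map fun z => f z.1 - f z.2) t = ((‖charFun (μ.map f) t‖ ^ 2 : ℝ) : ℂ) := by
  have hexp (z : X × X) : Complex.exp (inner ℝ (f z.1 - f z.2) t * Complex.I) =
      Complex.exp (inner ℝ (f z.1) t * Complex.I) *
        Complex.exp (inner ℝ (f z.2) (-t) * Complex.I) := by
    rw [← Complex.exp_add, inner_sub_left, inner_neg_right]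
    push_cast
    ring_nf
  rw [Complex.ofReal_pow, ← Complex.mul_conj', ← charFun_neg]
  simp_rw [charFun_apply]
  rw [integral_map (by fun_prop) (by fun_prop), integral_map (by fun_prop) (by fun_prop),
    integral_map (by fun_prop) (by fun_prop), ← integral_prod_mul]
  exact integral_congr_ae (.of_forall hexp)

/- The van der Corput inequality: in Fourier space it is Cauchy-Schwarz,
`|E φ|² ≤ E |φ|²` for the characteristic function `φ` of the law of `f`. -/
theorem laplaceNormSq_sq_le_laplaceNormSq_sub [IsProbabilityMeasure μ] {f : X → E}
    (hf : Measurable f) :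
    laplaceNormSq μ f ^ 2 ≤ laplaceNormSq (μ.prod μ) fun z => f z.1 - f z.2 := by
  have : IsProbabilityMeasure (μ.map f) := Measure.isProbabilityMeasure_map hf.aemeasurable
  set φ := charFun (μ.map f)
  have hφ_meas : Measurable fun t => ‖φ t‖ := measurable_charFun.norm
  have hdiff : laplaceNormSq (μ.prod μ) (fun z => f z.1 - f z.2) =
      ∫ t, ‖φ t‖ ^ 2 ∂stdGaussian E := by
    have h := laplaceNormSq_eq_integral_charFun (μ := μ.prod μ) (f := fun z => f z.1 - f z.2)
      (by fun_prop)
    simp_rw [charFun_map_sub_prod hf, integral_complex_ofReal] at h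
    exact_mod_cast h
  calc laplaceNormSq μ f ^ 2 = ‖∫ t, φ t ∂stdGaussian E‖ ^ 2 := by
        rw [← laplaceNormSq_eq_integral_charFun hf, Complex.norm_real, Real.norm_eq_abs, sq_abs]
    _ ≤ (∫ t, ‖φ t‖ ∂stdGaussian E) ^ 2 :=
        pow_le_pow_left₀ (norm_nonneg _) (norm_integral_le_integral_norm _) 2
    _ ≤ ∫ t, ‖φ t‖ ^ 2 ∂stdGaussian E :=
        integral_pow_le_integral_pow_of_mem_Icc hφ_meas
          (fun t => ⟨norm_nonneg _, norm_charFun_le_one t⟩) 2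
    _ = _ := hdiff.symm

theorem laplaceNormSq_clm_add_const_le [IsGaussian γ] (hγ : ∫ x, x ∂γ = 0) (A : V →L[ℝ] E)
    (b : E) : laplaceNormSq γ (fun x => A x + b) ≤ laplaceNormSq γ A := by
  have hmap : γ.map (fun x => A x + b) = (γ.map A).map (· + b) := by
    rw [Measure.map_map (by fun_prop) (by fun_prop)]
    rfl
  have hnorm (t : E) :
      ‖charFun (γ.map fun x => A x + b) t‖ = ‖charFun (γ.map A) t‖ := by
    rw [hmap, charFun_map_add_const, norm_mul, Complex.norm_exp_ofReal_mul_I, mul_one]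
  have hA : laplaceNormSq γ A = ∫ t, ‖charFun (γ.map A) t‖ ∂stdGaussian E := by
    have h := laplaceNormSq_eq_integral_charFun (μ := γ) (f := A) (by fun_prop)
    rw [integral_congr_ae (.of_forall (charFun_map_clm_eq_norm hγ A)),
      integral_complex_ofReal] at h
    exact_mod_cast h
  calc laplaceNormSq γ (fun x => A x + b)
      ≤ ‖(laplaceNormSq γ (fun x => A x + b) : ℂ)‖ := by
        rw [Complex.norm_real]; exact Real.le_norm_self _
    _ ≤ ∫ t, ‖charFun (γ.map fun x => A x + b) t‖ ∂stdGaussian E := by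
        rw [laplaceNormSq_eq_integral_charFun (by fun_prop)]
        exact norm_integral_le_integral_norm _
    _ = laplaceNormSq γ A := by simp_rw [hnorm, hA]

end CharFun

section PiMeasure

theorem measurePreserving_pi_prod_pi {ι X : Type*} [Fintype ι] [MeasurableSpace X] (μ : Measure X)
    [SigmaFinite μ] (T : ι → X × X → X × X)
    (hT : ∀ i, MeasurePreserving (T i) (μ.prod μ) (μ.prod μ)) :
    MeasurePreserving
      (fun z : (ι → X) × (ι → X) =>
        (fun i => (T i (z.1 i, z.2 i)).1, fun i => (T i (z.1 i, z.2 i)).2))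
      ((Measure.pi fun _ => μ).prod (Measure.pi fun _ => μ))
      ((Measure.pi fun _ => μ).prod (Measure.pi fun _ => μ)) := by
  have hcurry := measurePreserving_arrowProdEquivProdArrow X X ι (fun _ => μ) (fun _ => μ)
  exact hcurry.comp ((measurePreserving_pi (fun _ => μ.prod μ) (fun _ => μ.prod μ) hT).comp
    (hcurry.symm _))

theorem measurePreserving_piecewise_prod {ι X : Type*} [Fintype ι] [DecidableEq ι]
    [MeasurableSpace X] (μ : Measure X) [SigmaFinite μ] (S : Finset ι) :
    MeasurePreserving
      (fun z : (ι → X) × (ι → X) => (S.piecewise z.1 z.2, S.piecewise z.2 z.1))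
      ((Measure.pi fun _ => μ).prod (Measure.pi fun _ => μ))
      ((Measure.pi fun _ => μ).prod (Measure.pi fun _ => μ)) := by
  convert measurePreserving_pi_prod_pi μ (fun i => if i ∈ S then id else Prod.swap) fun i => ?_
    using 1
  · ext z i <;> by_cases hi : i ∈ S <;> simp [hi]
  · split_ifs
    exacts [.id _, Measure.measurePreserving_swap]

theorem measurePreserving_finCons {X : Type*} [MeasurableSpace X] (μ : Measure X) [SigmaFinite μ]
    (d : ℕ) :
    MeasurePreserving (fun z : X × (Fin d → X) => (Fin.cons z.1 z.2 : Fin (d + 1) → X))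
      (μ.prod (Measure.pi fun _ => μ)) (Measure.pi fun _ => μ) := by
  convert (measurePreserving_piFinSuccAbove (fun _ : Fin (d + 1) => μ) 0).symm using 1
  ext z : 1
  simp [MeasurableEquiv.piFinSuccAbove, Fin.insertNthEquiv]

variable {ι V : Type*} [Fintype ι] [NormedAddCommGroup V] [NormedSpace ℝ V] [MeasurableSpace V]
  [BorelSpace V] [SecondCountableTopology V] [CompleteSpace V] {γ : Measure V} [IsGaussian γ]

instance isGaussian_measurePi : IsGaussian (Measure.pi fun _ : ι => γ) := by
  have h : HasGaussianLaw (fun (x : ι → V) i => x i) (Measure.pi fun _ => γ) :=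
    iIndepFun.hasGaussianLaw
      (fun i => ⟨by
        rw [(measurePreserving_eval (fun _ : ι => γ) i).map_eq]; infer_instance⟩)
      (iIndepFun_pi (X := fun _ => id) fun _ => aemeasurable_id)
  simpa using h.isGaussian_map

theorem integral_measurePi_eq_zero (hγ : ∫ x, x ∂γ = 0) :
    ∫ x, x ∂(Measure.pi fun _ : ι => γ) = 0 := by
  ext i
  rw [eval_integral fun j => ?_]
  · exact (integral_comp_eval (μ := fun _ => γ) aestronglyMeasurable_id).trans hγ
  · exact integrable_comp_eval (μ := fun _ => γ) IsGaussian.integrable_id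

theorem measurePreserving_rotation (hγ : ∫ x, x ∂γ = 0) (θ : ℝ) :
    MeasurePreserving (ContinuousLinearMap.rotation θ) (γ.prod γ) (γ.prod γ) :=
  ⟨by fun_prop, IsGaussian.map_rotation_eq_self hγ θ⟩

end PiMeasure

section FwdDiff

variable {V E : Type*} [NormedAddCommGroup V] [NormedSpace ℝ V] [NormedAddCommGroup E]
  [NormedSpace ℝ E]

/-- `v` is the `d`-fold iterated finite difference of `u`: for all base points and all increments,
`Δ_{h₁} ⋯ Δ_{h_d} u = v (h₁, …, h_d)`. For a polynomial map `u` of degree at most `d` this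
singles out the polarization `v` of its homogeneous part of degree `d`. -/
def IsIterFwdDiff : (d : ℕ) → (V → E) → (V [×d]→L[ℝ] E) → Prop
  | 0, u, v => ∀ x, u x = v 0
  | d + 1, u, v => ∀ h, IsIterFwdDiff d (fwdDiff h u) (v.curryLeft h)

theorem IsIterFwdDiff.comp_affine {d : ℕ} {u : V → E} {v : V [×d]→L[ℝ] E}
    (h : IsIterFwdDiff d u v) (a : ℝ) (b : V) :
    IsIterFwdDiff d (fun x => u (a • x + b)) (a ^ d • v) := by
  induction d generalizing u with
  | zero => exact fun x => by simpa using h _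
  | succ d ih =>
    intro k
    convert ih (h (a • k)) using 1
    · ext x
      simp only [fwdDiff, smul_add]
      congr 2
      abel
    · ext w
      simp [pow_succ, mul_smul]

/-- The scaling constant produced by `d` rounds of differencing: each round rotates the two
copies of the variable by `π / 4`, which scales the increment by `√2` and the remaining
`d` variables by `√2 / 2`. -/
noncomputable def differencingConst : ℕ → ℝ
  | 0 => 1
  | d + 1 => differencingConst d * ((√2 / 2) ^ d * √2)

theorem differencingConst_pos (d : ℕ) : 0 < differencingConst d := by
  induction d with
  | zero => exact one_pos
  | succ d ih => exact mul_pos ih (by positivity)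

end FwdDiff

section VanDerCorput

variable {V E : Type*} [NormedAddCommGroup V] [NormedSpace ℝ V] [MeasurableSpace V] [BorelSpace V]
  [SecondCountableTopology V] [NormedAddCommGroup E] [MeasurableSpace E] [BorelSpace E]
  {γ : Measure V}

theorem laplaceNormSq_curryLeft [NormedSpace ℝ E] [SigmaFinite γ] {d : ℕ}
    (v : V [×d + 1]→L[ℝ] E) :
    laplaceNormSq (Measure.pi fun _ => γ) v =
      laplaceNormSq (γ.prod (Measure.pi fun _ => γ)) fun z : V × (Fin d → V) =>
        v.curryLeft z.1 z.2 :=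
  (laplaceNormSq_comp (measurePreserving_finCons γ d) v.cont.measurable).symm

theorem measurable_curryLeft_uncurry [NormedSpace ℝ E] {d : ℕ} (v : V [×d + 1]→L[ℝ] E) :
    Measurable fun z : V × (Fin d → V) => v.curryLeft z.1 z.2 :=
  v.cont.measurable.comp (Continuous.measurable (by fun_prop))

theorem laplaceNormSq_eq_integral_curryLeft [NormedSpace ℝ E] [IsProbabilityMeasure γ] {d : ℕ}
    (v : V [×d + 1]→L[ℝ] E) :
    laplaceNormSq (Measure.pi fun _ => γ) v =
      ∫ y, laplaceNormSq (Measure.pi fun _ => γ) (v.curryLeft y) ∂γ :=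
  (laplaceNormSq_curryLeft v).trans (laplaceNormSq_prod (measurable_curryLeft_uncurry v))

theorem integrable_laplaceNormSq_curryLeft [NormedSpace ℝ E] [IsProbabilityMeasure γ] {d : ℕ}
    (v : V [×d + 1]→L[ℝ] E) :
    Integrable (fun y => laplaceNormSq (Measure.pi fun _ => γ) (v.curryLeft y)) γ :=
  integrable_laplaceNormSq_left (f := fun z : V × (Fin d → V) => v.curryLeft z.1 z.2)
    (measurable_curryLeft_uncurry v)

variable [CompleteSpace V] [IsGaussian γ]

theorem laplaceNormSq_sub_eq_integral_fwdDiff [SecondCountableTopology E] (hγ : ∫ x, x ∂γ = 0)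
    {u : V → E} (hu : Measurable u) :
    laplaceNormSq (γ.prod γ) (fun z => u z.1 - u z.2) =
      ∫ y, laplaceNormSq γ (fun z => fwdDiff (√2 • y) u ((√2 / 2) • z + -(√2 / 2) • y)) ∂γ := by
  have hsub : Measurable fun z : V × V => u z.1 - u z.2 := by fun_prop
  rw [← laplaceNormSq_comp (measurePreserving_rotation hγ (Real.pi / 4)) hsub,
    laplaceNormSq_prod (hsub.comp (measurePreserving_rotation hγ _).measurable)]
  congr! 4 with y z
  have h : (√2 / 2) • y + (√2 / 2) • z = (√2 / 2) • z + -(√2 / 2) • y + √2 • y := by module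
  simp [ContinuousLinearMap.rotation_apply, fwdDiff, h, add_comm]

/- Iterating the van der Corput inequality, after a rotation that separates the increment from
the base point, replaces a polynomial map by its `d`-linear leading form. -/
theorem laplaceNormSq_pow_le_of_isIterFwdDiff [InnerProductSpace ℝ E] [FiniteDimensional ℝ E]
    (hγ : ∫ x, x ∂γ = 0) {d : ℕ} {u : V → E} {v : V [×d]→L[ℝ] E} (hu : Measurable u)
    (h : IsIterFwdDiff d u v) :
    laplaceNormSq γ u ^ 2 ^ d ≤
      laplaceNormSq (Measure.pi fun _ => γ) (differencingConst d • v) := by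
  induction d generalizing u with
  | zero =>
    have hu0 : u = fun _ => v 0 := funext h
    have hv (w : Fin 0 → V) : v w = v 0 := congrArg v (Subsingleton.elim _ _)
    simp [laplaceNormSq, differencingConst, hu0, hv]
  | succ d ih =>
    set U : V → V → E := fun y z => fwdDiff (√2 • y) u ((√2 / 2) • z + -(√2 / 2) • y) with hU
    have hU_meas : Measurable fun z : V × V => U z.1 z.2 := by
      simp only [hU, fwdDiff]; fun_prop
    have hstep (y : V) : laplaceNormSq γ (U y) ^ 2 ^ d ≤ laplaceNormSq (Measure.pi fun _ => γ)
        ((differencingConst (d + 1) • v).curryLeft y) := by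
      convert ih (u := U y) hU_meas.of_uncurry_left
        ((h (√2 • y)).comp_affine (√2 / 2) (-(√2 / 2) • y)) using 2
      ext w
      simp [differencingConst, smul_smul]
    calc laplaceNormSq γ u ^ 2 ^ (d + 1) = (laplaceNormSq γ u ^ 2) ^ 2 ^ d := by ring
      _ ≤ (∫ y, laplaceNormSq γ (U y) ∂γ) ^ 2 ^ d := by
          rw [← laplaceNormSq_sub_eq_integral_fwdDiff hγ hu]
          gcongr
          exact laplaceNormSq_sq_le_laplaceNormSq_sub hu
      _ ≤ ∫ y, laplaceNormSq γ (U y) ^ 2 ^ d ∂γ :=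
          integral_pow_le_integral_pow_of_mem_Icc (measurable_laplaceNormSq_left hU_meas)
            (fun y => ⟨laplaceNormSq_nonneg, laplaceNormSq_le_one⟩) _
      _ ≤ ∫ y, laplaceNormSq (Measure.pi fun _ => γ)
            ((differencingConst (d + 1) • v).curryLeft y) ∂γ :=
          integral_mono_of_nonneg (.of_forall fun y => pow_nonneg laplaceNormSq_nonneg _)
            (integrable_laplaceNormSq_curryLeft _) (.of_forall hstep)
      _ = laplaceNormSq (Measure.pi fun _ => γ) (differencingConst (d + 1) • v) :=
          (laplaceNormSq_eq_integral_curryLeft _).symm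

end VanDerCorput

section Multilinear

variable {V E : Type*} [NormedAddCommGroup V] [NormedSpace ℝ V] [NormedAddCommGroup E]
  [NormedSpace ℝ E] {d : ℕ}

theorem map_piecewise_smul (v : V [×d]→L[ℝ] E) (α δ : ℝ) (x y : Fin d → V) (S : Finset (Fin d)) :
    v (S.piecewise (α • x) (δ • y)) = (α ^ S.card * δ ^ Sᶜ.card) • v (S.piecewise x y) := by
  have hscal : S.piecewise (α • x) (δ • y) =
      fun k => (if k ∈ S then α else δ) • S.piecewise x y k := by
    ext k
    by_cases hk : k ∈ S <;> simp [hk]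
  rw [hscal, v.map_smul_univ, Finset.prod_ite]
  simp [Finset.compl_eq_univ_sdiff, Finset.filter_notMem_eq_sdiff]

theorem norm_sum_erase_univ_map_piecewise_le (v : V [×d]→L[ℝ] E) {α δ b : ℝ} (hα : 0 ≤ α)
    (hα1 : α ≤ 1) (hδ : 0 ≤ δ) (hδ1 : δ ≤ 1) {x y : Fin d → V} (hb : 0 ≤ b)
    (h : ∀ S : Finset (Fin d), ‖v (S.piecewise x y)‖ ≤ b) :
    ‖∑ S ∈ Finset.univ.erase Finset.univ, v (S.piecewise (α • x) (δ • y))‖ ≤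
      2 ^ d * (δ * b) := by
  have hterm (S) (hS : S ∈ Finset.univ.erase (Finset.univ : Finset (Fin d))) :
      ‖v (S.piecewise (α • x) (δ • y))‖ ≤ δ * b := by
    have hcard : Sᶜ.card ≠ 0 := by simpa using hS
    rw [map_piecewise_smul, norm_smul, Real.norm_of_nonneg (by positivity)]
    gcongr
    · exact (mul_le_of_le_one_left (by positivity) (pow_le_one₀ hα hα1)).trans
        (pow_le_of_le_one hδ hδ1 hcard)
    · exact h S
  calc _ ≤ (Finset.univ.erase (Finset.univ : Finset (Fin d))).card • (δ * b) :=
        norm_sum_le_of_le _ hterm |>.trans_eq (by simp)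
    _ ≤ 2 ^ d * (δ * b) := by
        rw [nsmul_eq_mul]
        gcongr
        exact_mod_cast (Finset.card_le_univ _).trans_eq (by simp)

theorem le_norm_map_smul_add_smul (v : V [×d]→L[ℝ] E) {M α δ : ℝ} (hM : 0 ≤ M) (hα : 0 ≤ α)
    (hα1 : α ≤ 1) (hδ : 0 ≤ δ) (hδ1 : δ ≤ 1) (hαδ : 1 / 8 ≤ α ^ d / 2 - 2 * 2 ^ d * δ)
    {x y : Fin d → V}
    (h : ∀ S : Finset (Fin d), ‖v (S.piecewise x y)‖ ∈ Set.Icc (M / 2) (2 * M)) :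
    M / 8 ≤ ‖v (α • x + δ • y)‖ := by
  have hmain : α ^ d * (M / 2) ≤ ‖v (Finset.univ.piecewise (α • x) (δ • y))‖ := by
    rw [map_piecewise_smul, norm_smul, Real.norm_of_nonneg (by positivity)]
    simpa using mul_le_mul_of_nonneg_left (h Finset.univ).1 (pow_nonneg hα d)
  have hrest := norm_sum_erase_univ_map_piecewise_le v hα hα1 hδ hδ1 (by positivity)
    fun S => (h S).2
  have hsplit : v (α • x + δ • y) = v (Finset.univ.piecewise (α • x) (δ • y)) +
      ∑ S ∈ Finset.univ.erase Finset.univ, v (S.piecewise (α • x) (δ • y)) := by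
    rw [Finset.add_sum_erase _ (fun S : Finset (Fin d) => v (S.piecewise (α • x) (δ • y)))
      (Finset.mem_univ _)]
    exact v.toMultilinearMap.map_add_univ _ _
  have hsub := norm_sub_le_norm_add (v (Finset.univ.piecewise (α • x) (δ • y)))
    (∑ S ∈ Finset.univ.erase Finset.univ, v (S.piecewise (α • x) (δ • y)))
  rw [hsplit]
  nlinarith

end Multilinear

section SmallBall

theorem laplaceNormSq_le_add_sum_restrict {X E ι : Type*} [MeasurableSpace X] [Fintype ι]
    [NormedAddCommGroup E] [MeasurableSpace E] [BorelSpace E] {μ : Measure X}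
    [IsProbabilityMeasure μ] {f : X → E} (hf : Measurable f) {B : ι → Set X}
    (hB : ∀ i, MeasurableSet (B i)) {c : ℝ} (hc : 0 ≤ c) (h : ∀ x, (∀ i, x ∉ B i) → c ≤ ‖f x‖) :
    laplaceNormSq μ f ≤ Real.exp (-c ^ 2 / 2) + ∑ i, laplaceNormSq (μ.restrict (B i)) f := by
  have hint := integrable_exp_neg_norm_sq (μ := μ) hf
  have hgood : ∫ x in (⋃ i, B i)ᶜ, Real.exp (-‖f x‖ ^ 2 / 2) ∂μ ≤ Real.exp (-c ^ 2 / 2) := by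
    calc _ ≤ ∫ _ in (⋃ i, B i)ᶜ, Real.exp (-c ^ 2 / 2) ∂μ := by
          refine setIntegral_mono_on hint.integrableOn (integrable_const _).integrableOn
            (MeasurableSet.iUnion hB).compl fun x hx => Real.exp_le_exp.mpr ?_
          have := pow_le_pow_left₀ hc (h x (by simpa using hx)) 2
          linarith
      _ ≤ Real.exp (-c ^ 2 / 2) := by
          simpa using mul_le_of_le_one_left (Real.exp_pos _).le measureReal_le_one
  have hbad : ∫ x in ⋃ i, B i, Real.exp (-‖f x‖ ^ 2 / 2) ∂μ ≤
      ∑ i, laplaceNormSq (μ.restrict (B i)) f := by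
    have hsum : Integrable (fun x => Real.exp (-‖f x‖ ^ 2 / 2))
        (∑ i, μ.restrict (B i)) := integrable_finsetSum_measure.mpr fun _ _ => hint.integrableOn
    simp only [laplaceNormSq]
    rw [← integral_finsetSum_measure fun _ _ => hint.integrableOn]
    refine integral_mono_measure ?_ (.of_forall fun _ => (Real.exp_pos _).le) hsum
    simpa using Measure.restrict_iUnion_le (μ := μ) (s := B)
  rw [laplaceNormSq, ← integral_add_compl (MeasurableSet.iUnion hB) hint]
  linarith

variable {V E : Type*} [NormedAddCommGroup V] [NormedSpace ℝ V] [MeasurableSpace V] [BorelSpace V]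
  [SecondCountableTopology V] [CompleteSpace V] [NormedAddCommGroup E] [InnerProductSpace ℝ E]
  [FiniteDimensional ℝ E] [MeasurableSpace E] [BorelSpace E] {γ : Measure V} [IsGaussian γ]
  {d : ℕ}

theorem laplaceNormSq_multilinear_add_le (hγ : ∫ x, x ∂γ = 0) (v : V [×d]→L[ℝ] E)
    (b : Fin d → V) :
    laplaceNormSq (Measure.pi fun _ => γ) (fun w => v (b + w)) ≤
      laplaceNormSq (Measure.pi fun _ => γ) v := by
  induction d with
  | zero => exact (congrArg _ (funext fun w => congrArg v (Subsingleton.elim _ _))).le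
  | succ d ih =>
    have hcons : laplaceNormSq (Measure.pi fun _ => γ) (fun w => v (b + w)) =
        laplaceNormSq (γ.prod (Measure.pi fun _ => γ)) fun z : V × (Fin d → V) =>
          v.curryLeft (b 0 + z.1) (Fin.tail b + z.2) := by
      rw [← laplaceNormSq_comp (measurePreserving_finCons γ d)
        (Continuous.measurable (by fun_prop))]
      refine congrArg _ (funext fun z => congrArg v (funext fun k => ?_))
      cases k using Fin.cases <;> simp [Fin.tail]
    have hmeas (b' : Fin d → V) : Measurable fun z : V × (Fin d → V) =>
        v.curryLeft (b 0 + z.1) (b' + z.2) :=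
      (measurable_curryLeft_uncurry v).comp (by fun_prop : Measurable fun z : V × (Fin d → V) =>
        (b 0 + z.1, b' + z.2))
    have hmeas0 : Measurable fun z : V × (Fin d → V) => v.curryLeft (b 0 + z.1) z.2 := by
      simpa only [zero_add] using hmeas 0
    rw [hcons, laplaceNormSq_curryLeft]
    refine (laplaceNormSq_prod_mono_right (hmeas _) hmeas0
      fun x => ih (v.curryLeft (b 0 + x)) (Fin.tail b)).trans ?_
    refine laplaceNormSq_prod_mono_left hmeas0 (measurable_curryLeft_uncurry v) fun y => ?_
    refine Eq.trans_le (congrArg _ (funext fun x => ?_)) (laplaceNormSq_clm_add_const_le hγ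
      ((ContinuousMultilinearMap.apply ℝ _ E y).comp v.curryLeft) (v.curryLeft (b 0) y))
    simp [add_comm]

theorem laplaceNormSq_multilinear_add_smul_le (hγ : ∫ x, x ∂γ = 0) (v : V [×d]→L[ℝ] E)
    (b : Fin d → V) {c : Fin d → ℝ} (hc : ∀ k, c k ≠ 0) :
    laplaceNormSq (Measure.pi fun _ => γ) (fun w => v fun k => b k + c k • w k) ≤
      laplaceNormSq (Measure.pi fun _ => γ) ((∏ k, c k) • v) := by
  convert laplaceNormSq_multilinear_add_le hγ ((∏ k, c k) • v) (fun k => (c k)⁻¹ • b k) using 3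
    with w
  rw [smul_apply, ← v.map_smul_univ]
  simp [smul_smul, hc]

/- Exchanging the coordinates outside `S` between the two copies of the variable turns the event
into one on the first copy alone; the second copy is then integrated with the first one frozen. -/
theorem laplaceNormSq_restrict_piecewise_le (hγ : ∫ x, x ∂γ = 0) (v : V [×d]→L[ℝ] E) {α δ : ℝ}
    (hα : 0 < α) (hα1 : α ≤ 1) (hδ : 0 < δ) (hδ1 : δ ≤ 1) {B : Set (Fin d → V)}
    (hB : MeasurableSet B) (S : Finset (Fin d)) :
    laplaceNormSq
        (((Measure.pi fun _ => γ).prod (Measure.pi fun _ => γ)).restrict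
          {z | S.piecewise z.1 z.2 ∈ B})
        (fun z => v (α • z.1 + δ • z.2)) ≤
      (Measure.pi fun _ => γ).real B *
        laplaceNormSq (Measure.pi fun _ => γ) ((α * δ) ^ d • v) := by
  set π : Measure (Fin d → V) := Measure.pi fun _ => γ
  set c : Fin d → ℝ := fun k => if k ∈ S then δ else α
  set b : (Fin d → V) → Fin d → V := fun x k => (if k ∈ S then α else δ) • x k
  have hc : ∀ k, c k ≠ 0 := fun k => by simp only [c]; split_ifs <;> positivity
  have hprod : (α * δ) ^ d ≤ ∏ k, c k := by
    rw [← Fin.prod_const]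
    refine Finset.prod_le_prod (fun k _ => by positivity) fun k _ => ?_
    simp only [c]
    split_ifs
    exacts [mul_le_of_le_one_left hδ.le hα1, mul_le_of_le_one_right hα.le hδ1]
  have hmeas : Measurable fun z : (Fin d → V) × (Fin d → V) =>
      v fun k => b z.1 k + c k • z.2 k := Continuous.measurable (by fun_prop)
  have hswap := (measurePreserving_piecewise_prod γ S).restrict_preimage
    (hB.prod (t := Set.univ) .univ)
  have hrestrict : (π.restrict B).prod π = (π.prod π).restrict (B ×ˢ Set.univ) := by
    rw [← Measure.prod_restrict, Measure.restrict_univ]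
  have hslice (x : Fin d → V) : laplaceNormSq π (fun y => v fun k => b x k + c k • y k) ≤
      laplaceNormSq π ((α * δ) ^ d • v) :=
    (laplaceNormSq_multilinear_add_smul_le hγ v (b x) hc).trans
      (laplaceNormSq_smul_anti v.cont.measurable (by
        rw [abs_of_nonneg (by positivity)]; exact hprod.trans (le_abs_self _)))
  calc _ = laplaceNormSq ((π.restrict B).prod π) fun z => v fun k => b z.1 k + c k • z.2 k := by
        rw [hrestrict, ← laplaceNormSq_comp hswap hmeas, Set.prod_univ]
        refine congrArg _ (funext fun z => congrArg v (funext fun k => ?_))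
        by_cases hk : k ∈ S <;> simp [b, c, hk, add_comm]
    _ ≤ ∫ _ in B, laplaceNormSq π ((α * δ) ^ d • v) ∂π := by
        rw [laplaceNormSq_prod hmeas]
        exact integral_mono (integrable_laplaceNormSq_left
          (f := fun z : (Fin d → V) × (Fin d → V) => v fun k => b z.1 k + c k • z.2 k) hmeas)
          (integrable_const _) hslice
    _ = _ := by simp

theorem laplaceNormSq_multilinear_le (hγ : ∫ x, x ∂γ = 0) (v : V [×d]→L[ℝ] E) {M θ t : ℝ}
    (hM : 0 ≤ M) (ht : 0 ≤ t) (hcos : 0 < Real.cos θ) (hsin : 0 < Real.sin θ)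
    (hθ : 1 / 8 ≤ Real.cos θ ^ d / 2 - 2 * 2 ^ d * Real.sin θ) :
    laplaceNormSq (Measure.pi fun _ => γ) (t • v) ≤ Real.exp (-(t * (M / 8)) ^ 2 / 2) +
      2 ^ d * (Measure.pi fun _ => γ).real {w | ‖v w‖ ∉ Set.Icc (M / 2) (2 * M)} *
        laplaceNormSq (Measure.pi fun _ => γ) ((t * (Real.cos θ * Real.sin θ) ^ d) • v) := by
  set π : Measure (Fin d → V) := Measure.pi fun _ => γ
  set B : Set (Fin d → V) := {w | ‖v w‖ ∉ Set.Icc (M / 2) (2 * M)}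
  have hB : MeasurableSet B := (v.cont.norm.measurable measurableSet_Icc).compl
  have hB' (S : Finset (Fin d)) : MeasurableSet {z : _ × _ | S.piecewise z.1 z.2 ∈ B} :=
    (measurePreserving_piecewise_prod γ S).measurable.fst hB
  have hrot : laplaceNormSq π (t • v) = laplaceNormSq (π.prod π) fun z =>
      (t • v) (Real.cos θ • z.1 + Real.sin θ • z.2) :=
    (laplaceNormSq_comp (measurePreserving_fst.comp
      (measurePreserving_rotation (integral_measurePi_eq_zero hγ) θ))
      (t • v).cont.measurable).symm
  have hgood (z : (Fin d → V) × (Fin d → V)) (hz : ∀ S : Finset (Fin d), S.piecewise z.1 z.2 ∉ B) :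
      t * (M / 8) ≤ ‖(t • v) (Real.cos θ • z.1 + Real.sin θ • z.2)‖ := by
    rw [smul_apply, norm_smul, Real.norm_of_nonneg ht]
    gcongr
    exact le_norm_map_smul_add_smul v hM hcos.le (Real.cos_le_one _) hsin.le (Real.sin_le_one _) hθ
      fun S => not_not.mp (hz S)
  calc _ ≤ _ := hrot.trans_le (laplaceNormSq_le_add_sum_restrict
        (Continuous.measurable (by fun_prop)) hB' (by positivity) hgood)
    _ ≤ Real.exp (-(t * (M / 8)) ^ 2 / 2) + ∑ _ : Finset (Fin d), π.real B *
          laplaceNormSq π ((Real.cos θ * Real.sin θ) ^ d • t • v) := by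
        gcongr with S
        exact laplaceNormSq_restrict_piecewise_le hγ (t • v) hcos (Real.cos_le_one _) hsin
          (Real.sin_le_one _) hB S
    _ = _ := by simp [smul_smul, mul_comm t, mul_assoc]

theorem exists_cos_pow_sub_sin_ge (d : ℕ) : ∃ θ : ℝ, 0 < Real.cos θ ∧ 0 < Real.sin θ ∧
    1 / 8 ≤ Real.cos θ ^ d / 2 - 2 * 2 ^ d * Real.sin θ := by
  have hcos : ∀ᶠ θ in 𝓝 (0 : ℝ), 0 < Real.cos θ :=
    (Real.continuous_cos.tendsto 0).eventually_const_lt (by simp)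
  have hdiff : ∀ᶠ θ in 𝓝 (0 : ℝ), 1 / 8 < Real.cos θ ^ d / 2 - 2 * 2 ^ d * Real.sin θ :=
    ((by fun_prop : Continuous fun θ => Real.cos θ ^ d / 2 - 2 * 2 ^ d * Real.sin θ).tendsto
      0).eventually_const_lt (by norm_num)
  have hsin : ∀ᶠ θ in 𝓝[>] (0 : ℝ), 0 < Real.sin θ := by
    filter_upwards [Ioo_mem_nhdsGT Real.pi_pos] with θ hθ
    exact Real.sin_pos_of_pos_of_lt_pi hθ.1 hθ.2
  obtain ⟨θ, h1, h2, h3⟩ := (hsin.and ((hcos.and hdiff).filter_mono nhdsWithin_le_nhds)).exists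
  exact ⟨θ, h2, h1, h3.le⟩

theorem pow_mul_le_of_contraction {f : ℝ → ℝ} (hf0 : ∀ t, 0 ≤ f t) (hf1 : ∀ t, f t ≤ 1) {η K : ℝ}
    (hη0 : 0 < η) (hη1 : η < 1) (hK : 0 ≤ K) {r : ℕ}
    (h : ∀ t, 0 < t → t ^ r * f t ≤ K + η ^ r / 2 * t ^ r * f (t * η)) {t : ℝ} (ht : 0 < t) :
    t ^ r * f t ≤ 2 * K + 1 := by
  have key (n : ℕ) : ∀ t, 0 < t → t * η ^ n ≤ 1 → t ^ r * f t ≤ 2 * K + 1 := by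
    induction n with
    | zero =>
      intro t ht ht1
      have : t ^ r * f t ≤ 1 :=
        mul_le_one₀ (pow_le_one₀ ht.le (by simpa using ht1)) (hf0 _) (hf1 _)
      linarith
    | succ n ih =>
      intro t ht ht1
      have hnext := ih (t * η) (by positivity) (by rwa [mul_assoc, ← pow_succ'])
      rw [mul_pow] at hnext
      linarith [h t ht]
  obtain ⟨n, hn⟩ := exists_pow_lt_of_lt_one (inv_pos.mpr ht) hη1
  exact key n t ht ((lt_inv_mul_iff₀ ht).mp (by simpa using hn)).le

theorem exists_pow_mul_exp_neg_sq_le (r : ℕ) {c : ℝ} (hc : 0 < c) :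
    ∃ K, 0 ≤ K ∧ ∀ t, 0 < t → t ^ r * Real.exp (-(t * c) ^ 2 / 2) ≤ K := by
  refine ⟨Real.exp (1 / 2) * r.factorial / c ^ r, by positivity, fun t ht => ?_⟩
  have hlin : Real.exp (-(t * c) ^ 2 / 2) ≤ Real.exp (1 / 2) * (Real.exp (t * c))⁻¹ := by
    rw [← Real.exp_neg, ← Real.exp_add, Real.exp_le_exp]
    linarith [sq_nonneg (t * c - 1)]
  have hpow := Real.pow_div_factorial_le_exp (x := t * c) (by positivity) r
  rw [div_le_iff₀ (by positivity), mul_pow] at hpow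
  rw [le_div_iff₀ (by positivity)]
  calc t ^ r * Real.exp (-(t * c) ^ 2 / 2) * c ^ r
      = t ^ r * c ^ r * Real.exp (-(t * c) ^ 2 / 2) := by ring
    _ ≤ Real.exp (t * c) * r.factorial * (Real.exp (1 / 2) * (Real.exp (t * c))⁻¹) := by gcongr
    _ = Real.exp (1 / 2) * r.factorial := by field_simp

/- Rotating by a small angle `θ` bounds `L (t • v)` by a Gaussian term plus a small multiple of
`L ((t * (cos θ * sin θ) ^ d) • v)`, and this recursion can be iterated down to `t ≤ 1`. -/
theorem exists_pow_mul_laplaceNormSq_multilinear_le (d r : ℕ) {M : ℝ} (hM : 0 < M) :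
    ∃ ε C : ℝ, 0 < ε ∧ 0 < C ∧ ∀ (V E : Type*) [NormedAddCommGroup V] [NormedSpace ℝ V]
      [MeasurableSpace V] [BorelSpace V] [SecondCountableTopology V] [CompleteSpace V]
      [NormedAddCommGroup E] [InnerProductSpace ℝ E] [FiniteDimensional ℝ E] [MeasurableSpace E]
      [BorelSpace E] (γ : Measure V) [IsGaussian γ] (v : V [×d]→L[ℝ] E), ∫ x, x ∂γ = 0 →
      (Measure.pi fun _ => γ).real {w | ‖v w‖ ∉ Set.Icc (M / 2) (2 * M)} ≤ ε →
      ∀ t, 0 < t → t ^ r * laplaceNormSq (Measure.pi fun _ => γ) ⇑(t • v) ≤ C := by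
  obtain ⟨θ, hcos, hsin, hθ⟩ := exists_cos_pow_sub_sin_ge d
  obtain ⟨K, hK, hexp⟩ := exists_pow_mul_exp_neg_sq_le r (show 0 < M / 8 by positivity)
  set η := (Real.cos θ * Real.sin θ) ^ (d + 1)
  have hcs : Real.cos θ * Real.sin θ < 1 := by
    nlinarith [Real.sin_sq_add_cos_sq θ, sq_nonneg (Real.cos θ - Real.sin θ)]
  have hη0 : 0 < η := by positivity
  refine ⟨η ^ r / 2 / 2 ^ d, 2 * K + 1, by positivity, by positivity,
    fun V E _ _ _ _ _ _ _ _ _ _ _ γ _ v hγ hbad t ht => ?_⟩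
  set π : Measure (Fin d → V) := Measure.pi fun _ => γ
  refine pow_mul_le_of_contraction (f := fun t => laplaceNormSq π (t • v))
    (fun _ => laplaceNormSq_nonneg) (fun _ => laplaceNormSq_le_one) hη0
    (pow_lt_one₀ (by positivity) hcs (by omega)) hK (fun t ht => ?_) ht
  have hmono : laplaceNormSq π ((t * (Real.cos θ * Real.sin θ) ^ d) • v) ≤
      laplaceNormSq π ((t * η) • v) := by
    refine laplaceNormSq_smul_anti v.cont.measurable ?_
    rw [abs_of_pos (by positivity), abs_of_pos (by positivity)]
    gcongr
    exact pow_le_pow_of_le_one (by positivity) hcs.le (by omega)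
  rw [le_div_iff₀' (by positivity)] at hbad
  calc t ^ r * laplaceNormSq π (t • v)
      ≤ t ^ r * (Real.exp (-(t * (M / 8)) ^ 2 / 2) +
          η ^ r / 2 * laplaceNormSq π ((t * η) • v)) := by
        gcongr
        refine (laplaceNormSq_multilinear_le hγ v hM.le ht.le hcos hsin hθ).trans ?_
        gcongr
        exact laplaceNormSq_nonneg
    _ ≤ _ := by linarith [hexp t ht]

end SmallBall

section Translation

theorem totalDegree_le_induction {σ R : Type*} [CommSemiring R]
    {motive : ℕ → MvPolynomial σ R → Prop} (C : ∀ n a, motive n (C a))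
    (add : ∀ n p q, motive n p → motive n q → motive n (p + q))
    (mul_X : ∀ n p i, p.totalDegree ≤ n → motive n p → motive (n + 1) (p * X i))
    {n : ℕ} {p : MvPolynomial σ R} (hp : p.totalDegree ≤ n) : motive n p := by
  induction n generalizing p with
  | zero => rw [totalDegree_eq_zero_iff_eq_C.mp (Nat.le_zero.mp hp)]; exact C 0 _
  | succ n ih =>
    rw [p.as_sum]
    refine Finset.sum_induction _ (motive (n + 1)) (add (n + 1))
      (by simpa using C (n + 1) 0) fun s hs => ?_
    have hsn : s.degree ≤ n + 1 := (le_totalDegree hs).trans hp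
    obtain rfl | ⟨i, hi⟩ : s = 0 ∨ ∃ i, s i ≠ 0 := by
      simpa [or_iff_not_imp_left] using Finsupp.ne_iff (f := s) (g := 0) |>.mp
    · exact C _ _
    · have hle : Finsupp.single i 1 ≤ s := Finsupp.single_le_iff.mpr (Nat.one_le_iff_ne_zero.mpr hi)
      have hdeg := congrArg Finsupp.degree (tsub_add_cancel_of_le hle)
      rw [map_add, Finsupp.degree_single] at hdeg
      have htd : (monomial (s - Finsupp.single i 1) (coeff s p)).totalDegree ≤ n :=
        (totalDegree_monomial_le _ _).trans (show (s - Finsupp.single i 1).degree ≤ n by omega)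
      have := mul_X n _ i htd (ih htd)
      rwa [X, monomial_mul, mul_one, tsub_add_cancel_of_le hle] at this

variable {σ R : Type*} [CommRing R]

/-- The translate `x ↦ p (x + h)` of a polynomial `p`. -/
noncomputable def translateAlgHom (h : σ → R) : MvPolynomial σ R →ₐ[R] MvPolynomial σ R :=
  aeval fun i => X i + C (h i)

theorem translateAlgHom_C (h : σ → R) (a : R) : translateAlgHom h (C a) = C a :=
  algHom_C _ a

theorem translateAlgHom_X (h : σ → R) (i : σ) : translateAlgHom h (X i) = X i + C (h i) :=
  aeval_X _ i

theorem eval_translateAlgHom (h x : σ → R) (p : MvPolynomial σ R) :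
    eval x (translateAlgHom h p) = eval (x + h) p := by
  induction p using MvPolynomial.induction_on with
  | C a => simp only [translateAlgHom_C, eval_C]
  | add p q hp hq => simp only [map_add, hp, hq]
  | mul_X p i hp =>
    simp only [map_mul, hp, translateAlgHom_X, map_add, eval_X, eval_C, Pi.add_apply]

theorem pderiv_translateAlgHom (h : σ → R) (i : σ) (p : MvPolynomial σ R) :
    pderiv i (translateAlgHom h p) = translateAlgHom h (pderiv i p) := by
  classical
  induction p using MvPolynomial.induction_on with
  | C a => simp only [translateAlgHom_C, pderiv_C, map_zero]
  | add p q hp hq => simp only [map_add, hp, hq]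
  | mul_X p j hp =>
    simp only [map_mul, pderiv_mul, hp, translateAlgHom_X, map_add, pderiv_X, pderiv_C, add_zero,
      Pi.single_apply, apply_ite (translateAlgHom h), map_one, map_zero]

theorem totalDegree_translateAlgHom_sub_le (h : σ → R) (p : MvPolynomial σ R) :
    (translateAlgHom h p - p).totalDegree ≤ p.totalDegree - 1 := by
  refine totalDegree_le_induction
    (motive := fun n p => (translateAlgHom h p - p).totalDegree ≤ n - 1)
    (fun n a => ?_) (fun n p q hp hq => ?_) (fun n p i hp ih => ?_) le_rfl
  · simp
  · rw [map_add, add_sub_add_comm]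
    exact (totalDegree_add _ _).trans (max_le hp hq)
  · have hsplit : translateAlgHom h (p * X i) - p * X i =
        (translateAlgHom h p - p) * (X i + C (h i)) + C (h i) * p := by
      rw [map_mul, translateAlgHom_X]; ring
    have hlin : (X i + C (h i)).totalDegree ≤ 1 :=
      (totalDegree_add _ _).trans (max_le ((totalDegree_monomial_le _ _).trans
        (by simp)) (by simp))
    have hmul : ((translateAlgHom h p - p) * (X i + C (h i))).totalDegree ≤ n := by
      rcases n with _ | n
      · rw [totalDegree_eq_zero_iff_eq_C.mp (Nat.le_zero.mp hp), translateAlgHom_C]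
        simp
      · exact (totalDegree_mul _ _).trans (by omega)
    rw [hsplit]
    exact (totalDegree_add _ _).trans
      (max_le hmul ((totalDegree_mul _ _).trans (by simpa using hp)))

theorem eval_of_totalDegree_le_one [Fintype σ] {p : MvPolynomial σ R} (hp : p.totalDegree ≤ 1)
    (x : σ → R) : eval x p = constantCoeff p + ∑ i, x i * constantCoeff (pderiv i p) := by
  classical
  refine totalDegree_le_induction (motive := fun n p => n ≤ 1 →
      eval x p = constantCoeff p + ∑ i, x i * constantCoeff (pderiv i p))
    (fun n a _ => ?_) (fun n p q hp hq hn => ?_) (fun n p i hp _ hn => ?_) hp le_rfl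
  · simp
  · simp only [map_add, hp hn, hq hn, mul_add, Finset.sum_add_distrib]; ring
  · rw [totalDegree_eq_zero_iff_eq_C.mp (show p.totalDegree = 0 by omega)]
    simp [pderiv_X, Pi.single_apply, apply_ite, mul_comm]

end Translation

section LeadingForm

variable {κ σ : Type*}

/-- The vector of values of a vector of polynomials, with the Euclidean norm. -/
noncomputable def evalVec (p : κ → MvPolynomial σ ℝ) (x : σ → ℝ) : EuclideanSpace ℝ κ :=
  WithLp.toLp 2 fun j => eval x (p j)

theorem continuous_evalVec (p : κ → MvPolynomial σ ℝ) : Continuous (evalVec p) :=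
  (PiLp.continuous_toLp 2 _).comp (continuous_pi fun j => continuous_eval (p j))

theorem evalVec_smul (t : ℝ) (p : κ → MvPolynomial σ ℝ) (x : σ → ℝ) :
    evalVec (t • p) x = t • evalVec p x := by
  ext j
  exact smul_eval x _ t

variable [Fintype κ] [Fintype σ]

/-- The symmetric multilinear form `∂^d p`, evaluated at the origin, of a vector `p` of
polynomials. When `p` has degree at most `d` it does not depend on the base point and is the
polarization of the homogeneous part of degree `d` of `p`. -/
noncomputable def leadingForm :
    (d : ℕ) → (κ → MvPolynomial σ ℝ) → (σ → ℝ) [×d]→L[ℝ] EuclideanSpace ℝ κ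
  | 0, p => ContinuousMultilinearMap.constOfIsEmpty ℝ _
      (WithLp.toLp 2 fun j => constantCoeff (p j))
  | d + 1, p => ContinuousLinearMap.uncurryLeft
      (∑ i, (ContinuousLinearMap.proj i : (σ → ℝ) →L[ℝ] ℝ).smulRight
        (leadingForm d fun j => pderiv i (p j)))

theorem curryLeft_leadingForm (d : ℕ) (p : κ → MvPolynomial σ ℝ) (h : σ → ℝ) :
    (leadingForm (d + 1) p).curryLeft h = ∑ i, h i • leadingForm d fun j => pderiv i (p j) := by
  simp [leadingForm]

theorem leadingForm_succ_apply (d : ℕ) (p : κ → MvPolynomial σ ℝ) (w : Fin (d + 1) → σ → ℝ) :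
    leadingForm (d + 1) p w =
      ∑ i, w 0 i • leadingForm d (fun j => pderiv i (p j)) (Fin.tail w) := by
  have := congrArg (· (Fin.tail w)) (curryLeft_leadingForm d p (w 0))
  simpa [sum_apply] using this

theorem leadingForm_smul (d : ℕ) (t : ℝ) (p : κ → MvPolynomial σ ℝ) :
    leadingForm d (t • p) = t • leadingForm d p := by
  induction d generalizing p with
  | zero => ext w j; simp [leadingForm]
  | succ d ih =>
    ext1 w
    have hp (i) : (fun j => pderiv i ((t • p) j)) = t • fun j => pderiv i (p j) := by
      ext1 j; exact Derivation.map_smul _ _ _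
    simp only [leadingForm_succ_apply, hp, ih, smul_apply, Finset.smul_sum]
    exact Finset.sum_congr rfl fun i _ => smul_comm _ _ _

theorem leadingForm_add (d : ℕ) (p q : κ → MvPolynomial σ ℝ) :
    leadingForm d (p + q) = leadingForm d p + leadingForm d q := by
  induction d generalizing p q with
  | zero => ext w j; simp [leadingForm]
  | succ d ih =>
    ext1 w
    have hpq (i) : (fun j => pderiv i ((p + q) j)) =
        (fun j => pderiv i (p j)) + fun j => pderiv i (q j) := by
      ext1 j; exact map_add _ _ _
    simp only [leadingForm_succ_apply, hpq, ih, add_apply, smul_add, Finset.sum_add_distrib]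

theorem leadingForm_pderiv_eq_zero {d : ℕ} {p : κ → MvPolynomial σ ℝ}
    (hp : ∀ j, (p j).totalDegree ≤ d) (i : κ → σ) :
    leadingForm d (fun j => pderiv (i j) (p j)) = 0 := by
  induction d generalizing p with
  | zero =>
    ext w j
    simp [leadingForm, pderiv_eq_zero_of_totalDegree_eq_zero (Nat.le_zero.mp (hp j))]
  | succ d ih =>
    ext1 w
    have hzero (k) : leadingForm d (fun j => pderiv k (pderiv (i j) (p j))) = 0 := by
      simp only [pderiv_pderiv_comm k]
      exact ih fun j => (totalDegree_pderiv_le k _).trans (Nat.sub_le_of_le_add (hp j))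
    simp only [leadingForm_succ_apply, hzero, zero_apply, smul_zero, Finset.sum_const_zero]

theorem leadingForm_translateAlgHom_sub {d : ℕ} {p : κ → MvPolynomial σ ℝ}
    (hp : ∀ j, (p j).totalDegree ≤ d + 1) (h : σ → ℝ) :
    leadingForm d (fun j => translateAlgHom h (p j) - p j) =
      (leadingForm (d + 1) p).curryLeft h := by
  rw [curryLeft_leadingForm]
  induction d generalizing p with
  | zero =>
    ext w j
    have hconst : constantCoeff (translateAlgHom h (p j)) = eval h (p j) := by
      rw [← eval_zero, eval_translateAlgHom, zero_add]
    simp [leadingForm, hconst, eval_of_totalDegree_le_one (hp j), sum_apply]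
  | succ d ih =>
    ext1 w
    have hdeg (i j) : (pderiv i (p j)).totalDegree ≤ d + 1 :=
      (totalDegree_pderiv_le i _).trans (Nat.sub_le_of_le_add (hp j))
    simp only [leadingForm_succ_apply, map_sub, pderiv_translateAlgHom, ih fun j => hdeg _ j,
      sum_apply, smul_apply, Finset.smul_sum]
    rw [Finset.sum_comm]
    simp only [smul_comm (w 0 _), pderiv_pderiv_comm]

theorem isIterFwdDiff_evalVec {d : ℕ} {p : κ → MvPolynomial σ ℝ}
    (hp : ∀ j, (p j).totalDegree ≤ d) : IsIterFwdDiff d (evalVec p) (leadingForm d p) := by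
  induction d generalizing p with
  | zero =>
    intro x
    ext j
    simp only [evalVec, leadingForm, ContinuousMultilinearMap.constOfIsEmpty_apply]
    rw [totalDegree_eq_zero_iff_eq_C.mp (Nat.le_zero.mp (hp j))]
    simp
  | succ d ih =>
    intro h
    have hdiff : fwdDiff h (evalVec p) = evalVec fun j => translateAlgHom h (p j) - p j := by
      ext x j
      simp [fwdDiff, evalVec, eval_translateAlgHom]
    rw [hdiff, ← leadingForm_translateAlgHom_sub hp]
    exact ih fun j => (totalDegree_translateAlgHom_sub_le h _).trans (Nat.sub_le_of_le_add (hp j))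

end LeadingForm

section LeadingFormConcentration

variable {β κ σ : Type} [Fintype κ] [Fintype σ]

theorem eval_polarize_ofFn {d : ℕ} {p : κ → MvPolynomial σ ℝ} (hp : ∀ j, (p j).totalDegree ≤ d)
    (o : β) (a : Fin d → β) (x : β × σ → ℝ) (j : κ) :
    eval x (polarize o (List.ofFn a) (p j)) = leadingForm d p (fun k i => x (a k, i)) j := by
  induction d generalizing p with
  | zero =>
    simp only [List.ofFn_zero, polarize_nil, leadingForm,
      ContinuousMultilinearMap.constOfIsEmpty_apply]
    rw [totalDegree_eq_zero_iff_eq_C.mp (Nat.le_zero.mp (hp j))]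
    simp
  | succ d ih =>
    rw [List.ofFn_succ, polarize_cons, leadingForm_succ_apply, map_sum]
    simp only [WithLp.ofLp_sum, Finset.sum_apply, PiLp.smul_apply, smul_eq_mul, map_mul, eval_X]
    exact Finset.sum_congr rfl fun i _ => congrArg _ <| ih
      (fun j => (totalDegree_pderiv_le i _).trans (Nat.sub_le_of_le_add (hp j))) fun k => a k.succ

theorem eval_baseGradSq_ofFn {d : ℕ} {p : MvPolynomial σ ℝ} (hp : p.totalDegree ≤ d + 1)
    (o : β) (a : Fin d → β) (x : β × σ → ℝ) :
    eval x (baseGradSq o (List.ofFn a) p) =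
      ‖leadingForm d (fun j => pderiv j p) fun k i => x (a k, i)‖ ^ 2 := by
  have hdeg (j) : (pderiv j p).totalDegree ≤ d :=
    (totalDegree_pderiv_le j p).trans (Nat.sub_le_of_le_add hp)
  simp only [EuclideanSpace.real_norm_sq_eq, baseGradSq, map_sum, map_pow,
    eval_polarize_ofFn hdeg o a x]

theorem measurePreserving_gaussPi_curry [Fintype β] :
    MeasurePreserving (fun (x : β × σ → ℝ) b i => x (b, i)) (gaussPi (β × σ))
      (Measure.pi fun _ => gaussPi σ) := by
  refine ⟨by fun_prop, ?_⟩
  have h := Measure.infinitePi_map_curry (ι := β) (κ := σ) (X := ℝ) fun _ _ => gaussianReal 0 1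
  simp only [Measure.infinitePi_eq_pi] at h
  exact h

theorem measurePreserving_gaussPi_tail (d : ℕ) :
    MeasurePreserving (fun (x : Fin (d + 1) × σ → ℝ) (k : Fin d) i => x (k.succ, i))
      (gaussPi (Fin (d + 1) × σ)) (Measure.pi fun _ => gaussPi σ) :=
  measurePreserving_snd.comp <|
    (measurePreserving_piFinSuccAbove (fun _ : Fin (d + 1) => gaussPi σ) 0).comp
      measurePreserving_gaussPi_curry

theorem measureReal_abs_sub_gaussExpect_ge_le (p : MvPolynomial σ ℝ) {c : ℝ} (hc : 0 < c) :
    (gaussPi σ).real {x | c ≤ |eval x p - gaussExpect p|} ≤ gaussVar p / c ^ 2 := by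
  have hmem : MemLp (fun x => eval x p) 2 (gaussPi σ) :=
    (memLp_two_iff_integrable_sq (continuous_eval p).aestronglyMeasurable).mpr
      ((integrable_eval_gaussPi (p ^ 2)).congr (.of_forall fun x => map_pow _ _ _))
  have hvar : variance (fun x => eval x p) (gaussPi σ) = gaussVar p := by
    simp [variance_eq_sub hmem, gaussVar, gaussExpect_apply]
  have h := meas_ge_le_variance_div_sq hmem hc
  rw [hvar] at h
  exact ENNReal.toReal_le_of_le_ofReal
    (div_nonneg (hvar ▸ variance_nonneg _ _) (sq_nonneg c)) h

theorem quarter_sq_le_abs_sq_sub {M s r : ℝ} (hM : 0 ≤ M) (hs : s ∈ Set.Icc (1 / 2) 2)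
    (hr : 0 ≤ r) (h : r ∉ Set.Icc (M / 2) (2 * M)) : M ^ 2 / 4 ≤ |r ^ 2 - M ^ 2 * s| := by
  have hlow : M ^ 2 * (1 / 2) ≤ M ^ 2 * s := by gcongr; exact hs.1
  have hup : M ^ 2 * s ≤ M ^ 2 * 2 := by gcongr; exact hs.2
  rw [Set.mem_Icc, not_and_or, not_le, not_le] at h
  rcases h with h | h
  · exact le_abs.mpr (.inr (by nlinarith))
  · exact le_abs.mpr (.inl (by nlinarith))

theorem exists_measureReal_norm_leadingForm_notMem_Icc_le (d : ℕ) : ∃ A : ℝ, 0 ≤ A ∧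
    ∀ (σ : Type) [Fintype σ] (p : MvPolynomial σ ℝ), numberOp p = ((d + 1 : ℕ) : ℝ) • p →
      p.totalDegree ≤ d + 1 → gaussExpect (p ^ 2) ∈ Set.Icc (1 / 2) 2 →
      (Measure.pi fun _ : Fin d => gaussPi σ).real
          {w | ‖leadingForm d (fun j => pderiv j p) w‖ ∉
            Set.Icc (√(d + 1).factorial / 2) (2 * √(d + 1).factorial)} ≤
        A * fourthCumulant p := by
  obtain ⟨A, hA, hvar⟩ := exists_gaussVar_baseGradSq_le (d + 1) d
  set M : ℝ := √(d + 1).factorial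
  have hM : 0 < M := Real.sqrt_pos.mpr (mod_cast (d + 1).factorial_pos)
  have hMsq : M ^ 2 = (d + 1).factorial := Real.sq_sqrt (Nat.cast_nonneg _)
  refine ⟨A / (M ^ 2 / 4) ^ 2, by positivity, fun σ _ p hp hdeg hsq => ?_⟩
  have hnodup : ((0 : Fin (d + 1)) :: List.ofFn Fin.succ).Nodup := by
    have h := List.nodup_ofFn.mpr (Function.injective_id (α := Fin (d + 1)))
    rwa [List.ofFn_succ] at h
  set T := baseGradSq (0 : Fin (d + 1)) (List.ofFn Fin.succ) p
  have hmean : gaussExpect T = M ^ 2 * gaussExpect (p ^ 2) := by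
    rw [gaussExpect_baseGradSq hp hnodup, List.length_ofFn, Nat.descFactorial_self, hMsq]
  set v := leadingForm d fun j => pderiv j p
  have hmeas : MeasurableSet {w | ‖v w‖ ∉ Set.Icc (M / 2) (2 * M)} :=
    (v.cont.norm.measurable measurableSet_Icc).compl
  rw [← (measurePreserving_gaussPi_tail d).measureReal_preimage hmeas.nullMeasurableSet]
  calc _ ≤ (gaussPi (Fin (d + 1) × σ)).real {x | M ^ 2 / 4 ≤ |eval x T - gaussExpect T|} := by
        refine measureReal_mono fun x hx => ?_
        rw [Set.mem_ofPred_eq, hmean, eval_baseGradSq_ofFn hdeg]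
        exact quarter_sq_le_abs_sq_sub hM.le hsq (norm_nonneg _) hx
    _ ≤ gaussVar T / (M ^ 2 / 4) ^ 2 := measureReal_abs_sub_gaussExpect_ge_le T (by positivity)
    _ ≤ A * fourthCumulant p / (M ^ 2 / 4) ^ 2 := by
        gcongr
        exact hvar _ _ _ p hp hdeg _ (List.length_ofFn) hnodup
    _ = A / (M ^ 2 / 4) ^ 2 * fourthCumulant p := by ring

end LeadingFormConcentration

section NegativeMoments

theorem ofReal_pow_inv_le_one_add_tsum_exp (q : ℕ) {g : ℝ} (hg : 0 ≤ g) :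
    (ENNReal.ofReal g ^ q)⁻¹ ≤
      1 + ∑' k : ℕ, ENNReal.ofReal (4 ^ ((k + 1) * q) * Real.exp ((1 - 4 ^ k * g) / 2)) := by
  have hterm {k : ℕ} (hk : 4 ^ k * g ≤ 1) :
      ENNReal.ofReal (4 ^ ((k + 1) * q)) ≤
        ENNReal.ofReal (4 ^ ((k + 1) * q) * Real.exp ((1 - 4 ^ k * g) / 2)) :=
    ENNReal.ofReal_le_ofReal <| le_mul_of_one_le_right (by positivity) <|
      Real.one_le_exp (by linarith)
  rcases hg.eq_or_lt with rfl | hg0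
  · have htop : ∑' k : ℕ, ENNReal.ofReal (4 ^ ((k + 1) * q) *
        Real.exp ((1 - 4 ^ k * 0) / 2)) = ⊤ := by
      rw [eq_top_iff, ← ENNReal.tsum_const_eq_top_of_ne_zero (α := ℕ) one_ne_zero]
      refine ENNReal.tsum_le_tsum fun k => le_trans ?_ (hterm (by simp))
      exact ENNReal.one_le_ofReal.mpr (one_le_pow₀ (by norm_num))
    simp only [htop, add_top, le_top]
  rcases le_or_gt 1 g with h1 | h1
  · refine le_add_right (ENNReal.inv_le_one.mpr (one_le_pow₀ ?_))
    exact ENNReal.one_le_ofReal.mpr h1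
  obtain ⟨k, hk, hk'⟩ := exists_nat_pow_near_of_lt_one hg0 h1.le (y := (4⁻¹ : ℝ))
    (by norm_num) (by norm_num)
  rw [inv_pow] at hk hk'
  refine le_add_left (le_trans ?_ ((hterm ?_).trans (ENNReal.le_tsum k)))
  · rw [← ENNReal.ofReal_pow hg, ← ENNReal.ofReal_inv_of_pos (by positivity), ← inv_pow, pow_mul]
    gcongr
    exact inv_le_of_inv_le₀ (by positivity) hk.le
  · rwa [← le_inv_mul_iff₀ (by positivity), mul_one]

variable {X E : Type*} [MeasurableSpace X] [NormedAddCommGroup E] [NormedSpace ℝ E]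
  [MeasurableSpace E] [BorelSpace E] {μ : Measure X} [IsProbabilityMeasure μ] {f : X → E}

theorem lintegral_ofReal_mul_exp_le (hf : Measurable f) (q k : ℕ) {C : ℝ}
    (h : ((2 : ℝ) ^ k) ^ (2 * q + 1) * laplaceNormSq μ ((2 : ℝ) ^ k • f) ≤ C) :
    ∫⁻ x, ENNReal.ofReal (4 ^ ((k + 1) * q) * Real.exp ((1 - 4 ^ k * ‖f x‖ ^ 2) / 2)) ∂μ ≤
      ENNReal.ofReal (4 ^ q * Real.exp (1 / 2) * C * (1 / 2) ^ k) := by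
  have hpow : ((2 : ℝ) ^ k) ^ 2 = 4 ^ k := by rw [pow_right_comm]; norm_num
  have hexp (x) : (4 : ℝ) ^ ((k + 1) * q) * Real.exp ((1 - 4 ^ k * ‖f x‖ ^ 2) / 2) =
      4 ^ ((k + 1) * q) * Real.exp (1 / 2) * Real.exp (-‖((2 : ℝ) ^ k • f) x‖ ^ 2 / 2) := by
    rw [mul_assoc, ← Real.exp_add, Pi.smul_apply, norm_smul, mul_pow, Real.norm_eq_abs, sq_abs,
      hpow, sub_div, neg_div, ← sub_eq_add_neg]
  simp only [hexp]
  rw [← ofReal_integral_eq_lintegral_ofReal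
    ((integrable_exp_neg_norm_sq (by fun_prop)).const_mul _)
    (ae_of_all _ fun x => by positivity), integral_const_mul]
  refine ENNReal.ofReal_le_ofReal ?_
  calc 4 ^ ((k + 1) * q) * Real.exp (1 / 2) * laplaceNormSq μ ((2 : ℝ) ^ k • f)
      = 4 ^ q * Real.exp (1 / 2) *
          (((2 : ℝ) ^ k) ^ (2 * q + 1) * laplaceNormSq μ ((2 : ℝ) ^ k • f)) * (1 / 2) ^ k := by
        have hcancel : (2 : ℝ) ^ k * (1 / 2) ^ k = 1 := by rw [← mul_pow]; norm_num
        rw [pow_succ _ (2 * q), pow_mul _ 2 q, hpow, ← pow_mul, add_one_mul, pow_add]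
        linear_combination (-(4 ^ (k * q) * 4 ^ q * Real.exp (1 / 2) *
          laplaceNormSq μ ((2 : ℝ) ^ k • f))) * hcancel
    _ ≤ 4 ^ q * Real.exp (1 / 2) * C * (1 / 2) ^ k := by gcongr

theorem lintegral_ofReal_normSq_pow_inv_le (hf : Measurable f) (q : ℕ) {C : ℝ}
    (h : ∀ t : ℝ, 0 < t → t ^ (2 * q + 1) * laplaceNormSq μ (t • f) ≤ C) :
    ∫⁻ x, (ENNReal.ofReal (‖f x‖ ^ 2) ^ q)⁻¹ ∂μ ≤
      ENNReal.ofReal (1 + 4 ^ q * Real.exp (1 / 2) * C * 2) := by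
  have hC : 0 ≤ C := by
    simpa using (mul_nonneg (by positivity) laplaceNormSq_nonneg).trans (h 1 one_pos)
  calc ∫⁻ x, (ENNReal.ofReal (‖f x‖ ^ 2) ^ q)⁻¹ ∂μ
      ≤ ∫⁻ x, (1 + ∑' k : ℕ, ENNReal.ofReal (4 ^ ((k + 1) * q) *
          Real.exp ((1 - 4 ^ k * ‖f x‖ ^ 2) / 2))) ∂μ :=
        lintegral_mono fun x => ofReal_pow_inv_le_one_add_tsum_exp q (sq_nonneg _)
    _ = 1 + ∑' k : ℕ, ∫⁻ x, ENNReal.ofReal (4 ^ ((k + 1) * q) *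
          Real.exp ((1 - 4 ^ k * ‖f x‖ ^ 2) / 2)) ∂μ := by
        rw [lintegral_add_left measurable_const, lintegral_tsum fun k => by fun_prop]
        simp
    _ ≤ 1 + ∑' k : ℕ, ENNReal.ofReal (4 ^ q * Real.exp (1 / 2) * C * (1 / 2) ^ k) := by
        gcongr with k
        exact lintegral_ofReal_mul_exp_le hf q k (h _ (by positivity))
    _ = ENNReal.ofReal (1 + 4 ^ q * Real.exp (1 / 2) * C * 2) := by
        rw [← ENNReal.ofReal_tsum_of_nonneg (fun k => by positivity)
          (summable_geometric_two.mul_left _), tsum_mul_left, tsum_geometric_two,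
          ENNReal.ofReal_add zero_le_one (by positivity), ENNReal.ofReal_one]

end NegativeMoments

section Main

variable {σ : Type} [Fintype σ]

instance isGaussian_gaussPi : IsGaussian (gaussPi σ) := by
  unfold gaussPi; infer_instance

theorem integral_id_gaussPi : ∫ x, x ∂gaussPi σ = 0 :=
  integral_measurePi_eq_zero integral_id_gaussianReal

theorem sqField_eq_norm_evalVec_sq (P : MvPolynomial σ ℝ) (x : σ → ℝ) :
    sqField P x = ‖evalVec (fun j => pderiv j P) x‖ ^ 2 := by
  rw [EuclideanSpace.real_norm_sq_eq]
  rfl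

theorem leadingForm_pderiv_add_of_totalDegree_le {d : ℕ} {R : MvPolynomial σ ℝ}
    (hR : R.totalDegree ≤ d) (Q : MvPolynomial σ ℝ) :
    leadingForm d (fun j => pderiv j (Q + R)) = leadingForm d fun j => pderiv j Q := by
  have hadd : (fun j => pderiv j (Q + R)) = (fun j => pderiv j Q) + fun j => pderiv j R :=
    funext fun j => map_add _ _ _
  rw [hadd, leadingForm_add, leadingForm_pderiv_eq_zero fun _ => hR, add_zero]

theorem exists_pow_mul_laplaceNormSq_evalVec_pderiv_le (d k : ℕ) {M : ℝ} (hM : 0 < M) :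
    ∃ ε C : ℝ, 0 < ε ∧ 0 < C ∧ ∀ (σ : Type) [Fintype σ] (P : MvPolynomial σ ℝ),
      P.totalDegree ≤ d + 1 →
      (Measure.pi fun _ : Fin d => gaussPi σ).real
        {w | ‖leadingForm d (fun j => pderiv j P) w‖ ∉ Set.Icc (M / 2) (2 * M)} ≤ ε →
      ∀ t : ℝ, 0 < t →
        t ^ k * laplaceNormSq (gaussPi σ) (t • evalVec fun j => pderiv j P) ≤ C := by
  obtain ⟨ε, C, hε, hC, hmult⟩ := exists_pow_mul_laplaceNormSq_multilinear_le d (k * 2 ^ d) hM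
  have hc := differencingConst_pos d
  set c := differencingConst d
  refine ⟨ε, 1 + C / c ^ (k * 2 ^ d), hε, by positivity, fun σ _ P hP hbad t ht => ?_⟩
  have hdeg (j : σ) : (t • pderiv j P).totalDegree ≤ d :=
    (totalDegree_smul_le _ _).trans ((totalDegree_pderiv_le j P).trans (by omega))
  have hdiff := laplaceNormSq_pow_le_of_isIterFwdDiff integral_id_gaussPi
    (continuous_evalVec _).measurable (isIterFwdDiff_evalVec hdeg)
  have hform : leadingForm d (fun j => t • pderiv j P) = t • leadingForm d fun j => pderiv j P :=
    leadingForm_smul d t _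
  have hvec : evalVec (fun j => t • pderiv j P) = t • evalVec fun j => pderiv j P :=
    funext (evalVec_smul t _)
  rw [hform, hvec, smul_smul] at hdiff
  have hI : 0 ≤ laplaceNormSq (gaussPi σ) (t • evalVec fun j => pderiv j P) := laplaceNormSq_nonneg
  set I := laplaceNormSq (gaussPi σ) (t • evalVec fun j => pderiv j P)
  have hpow : (t ^ k * I) ^ 2 ^ d ≤ C / c ^ (k * 2 ^ d) := by
    rw [le_div_iff₀ (by positivity)]
    calc (t ^ k * I) ^ 2 ^ d * c ^ (k * 2 ^ d)
        = (c * t) ^ (k * 2 ^ d) * I ^ 2 ^ d := by rw [mul_pow, mul_pow, ← pow_mul]; ring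
      _ ≤ _ := by gcongr
      _ ≤ C := hmult _ _ _ _ integral_id_gaussPi hbad (c * t) (by positivity)
  rcases le_or_gt (t ^ k * I) 1 with hle | hlt
  · exact hle.trans (le_add_of_nonneg_right (by positivity))
  · exact (le_self_pow₀ hlt.le (by positivity)).trans
      (hpow.trans (le_add_of_nonneg_left zero_le_one))

theorem exists_lintegral_sqField_pow_inv_le (d q : ℕ) : ∃ ε C : ℝ, 0 < ε ∧ 0 < C ∧
    ∀ (σ : Type) [Fintype σ] (Q R : MvPolynomial σ ℝ),
      numberOp Q = ((d + 1 : ℕ) : ℝ) • Q → Q.totalDegree ≤ d + 1 → R.totalDegree ≤ d →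
      gaussExpect (Q ^ 2) ∈ Set.Icc (1 / 2) 2 → fourthCumulant Q ≤ ε →
      ∫⁻ x, (ENNReal.ofReal (sqField (Q + R) x) ^ q)⁻¹ ∂gaussPi σ ≤ ENNReal.ofReal C := by
  obtain ⟨A, hA, hconc⟩ := exists_measureReal_norm_leadingForm_notMem_Icc_le d
  obtain ⟨ε, C, hε, hC, hlaplace⟩ := exists_pow_mul_laplaceNormSq_evalVec_pderiv_le d (2 * q + 1)
    (M := √(d + 1).factorial) (by positivity)
  refine ⟨ε / (A + 1), 1 + 4 ^ q * Real.exp (1 / 2) * C * 2, by positivity, by positivity,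
    fun σ _ Q R hQ hQdeg hR hvar hcum => ?_⟩
  simp only [sqField_eq_norm_evalVec_sq]
  refine lintegral_ofReal_normSq_pow_inv_le (continuous_evalVec _).measurable q
    (hlaplace σ (Q + R) ((totalDegree_add _ _).trans (max_le hQdeg (by omega))) ?_)
  rw [leadingForm_pderiv_add_of_totalDegree_le hR]
  calc _ ≤ A * fourthCumulant Q := hconc σ Q hQ hQdeg hvar
    _ ≤ A * (ε / (A + 1)) := by gcongr
    _ ≤ ε := by
      rw [mul_div_assoc', div_le_iff₀ (by positivity)]
      nlinarith

theorem exists_gaussExpect_pow_le (m k : ℕ) : ∃ A : ℝ, 0 < A ∧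
    ∀ (σ : Type) [Fintype σ] (p : MvPolynomial σ ℝ), numberOp p = (m : ℝ) • p →
      p.totalDegree ≤ m → gaussExpect (p ^ (2 * (k + 1))) ≤ A * gaussExpect (p ^ 2) ^ (k + 1) := by
  obtain ⟨A, hA, h⟩ := exists_gaussExpect_polyNormSq_pow_le m k
  refine ⟨A, hA, fun σ _ p hp hdeg => ?_⟩
  simpa [polyNormSq, ← pow_mul] using h σ Unit (fun _ => p) (fun _ => hp) fun _ => hdeg

theorem integral_pow_map_eval (p : MvPolynomial σ ℝ) (k : ℕ) :
    ∫ x, x ^ k ∂(gaussPi σ).map (fun x => eval x p) = gaussExpect (p ^ k) := by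
  rw [integral_map (continuous_eval p).aemeasurable (by fun_prop), gaussExpect_apply]
  simp only [map_pow]

theorem integrable_pow_map_eval (p : MvPolynomial σ ℝ) (k : ℕ) :
    Integrable (fun x => x ^ k) ((gaussPi σ).map fun x => eval x p) := by
  rw [integrable_map_measure (by fun_prop) (continuous_eval p).aemeasurable]
  exact (integrable_eval_gaussPi (p ^ k)).congr (.of_forall fun x => map_pow _ _ _)

section Sequence

variable {m : ℕ} {K : ℕ → ℕ} {Q : (n : ℕ) → MvPolynomial (Fin (K n)) ℝ}

theorem tendsto_gaussExpect_pow_of_tendstoInLaw (hQ : ∀ n, Q n ∈ chaos (K n) m)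
    (hlaw : TendstoInLaw (fun n => Measure.map (fun x => eval x (Q n)) (gaussPi (Fin (K n))))
      (gaussianReal 0 1)) (k : ℕ) :
    Tendsto (fun n => gaussExpect (Q n ^ (2 * (k + 1)))) atTop
      (𝓝 (∫ x, x ^ (2 * (k + 1)) ∂gaussianReal 0 1)) := by
  have hprob (n : ℕ) : IsProbabilityMeasure ((gaussPi (Fin (K n))).map fun x => eval x (Q n)) :=
    Measure.isProbabilityMeasure_map (continuous_eval _).aemeasurable
  simp only [← integral_pow_map_eval]
  refine tendsto_integral_pow_of_tendstoInLaw hlaw (fun n k => integrable_pow_map_eval (Q n) k)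
    (integrable_pow_gaussianReal 0 1) (fun k => ?_) k
  obtain ⟨A, hA, h⟩ := exists_gaussExpect_pow_le m k
  refine ⟨A, hA, fun n => ?_⟩
  simpa only [integral_pow_map_eval] using
    h _ (Q n) (numberOp_of_mem_chaos (hQ n)) (totalDegree_le_of_mem_chaos (hQ n))

theorem tendsto_gaussExpect_sq_of_tendstoInLaw (hQ : ∀ n, Q n ∈ chaos (K n) m)
    (hlaw : TendstoInLaw (fun n => Measure.map (fun x => eval x (Q n)) (gaussPi (Fin (K n))))
      (gaussianReal 0 1)) :
    Tendsto (fun n => gaussExpect (Q n ^ 2)) atTop (𝓝 1) := by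
  simpa [integral_pow_succ_gaussianReal] using tendsto_gaussExpect_pow_of_tendstoInLaw hQ hlaw 0

theorem tendsto_fourthCumulant_of_tendstoInLaw (hQ : ∀ n, Q n ∈ chaos (K n) m)
    (hlaw : TendstoInLaw (fun n => Measure.map (fun x => eval x (Q n)) (gaussPi (Fin (K n))))
      (gaussianReal 0 1)) :
    Tendsto (fun n => fourthCumulant (Q n)) atTop (𝓝 0) := by
  have hfour : Tendsto (fun n => gaussExpect (Q n ^ 4)) atTop (𝓝 3) := by
    simpa [integral_pow_succ_gaussianReal] using tendsto_gaussExpect_pow_of_tendstoInLaw hQ hlaw 1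
  simpa [fourthCumulant] using
    hfour.sub (((tendsto_gaussExpect_sq_of_tendstoInLaw hQ hlaw).pow 2).const_mul 3)

theorem ne_zero_of_tendstoInLaw_gaussianReal (hQ : ∀ n, Q n ∈ chaos (K n) m)
    (hlaw : TendstoInLaw (fun n => Measure.map (fun x => eval x (Q n)) (gaussPi (Fin (K n))))
      (gaussianReal 0 1)) : m ≠ 0 := by
  rintro rfl
  have hconst (n) : fourthCumulant (Q n) = -2 * gaussExpect (Q n ^ 2) ^ 2 := by
    have hC := totalDegree_eq_zero_iff_eq_C.mp (Nat.le_zero.mp (totalDegree_le_of_mem_chaos (hQ n)))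
    rw [fourthCumulant, hC]
    simp only [← C_pow, gaussExpect_C]
    ring
  have hlim := ((tendsto_gaussExpect_sq_of_tendstoInLaw hQ hlaw).pow 2).const_mul (-2)
  simp only [← hconst] at hlim
  have := tendsto_nhds_unique hlim (tendsto_fourthCumulant_of_tendstoInLaw hQ hlaw)
  norm_num at this

end Sequence

end Main

theorem negative_moments_sum_of_chaoses_general (m : ℕ) (K : ℕ → ℕ)
    (Q R : (n : ℕ) → MvPolynomial (Fin (K n)) ℝ)
    (hQ : ∀ n, Q n ∈ chaos (K n) m)
    (hR : ∀ n, (R n).totalDegree ≤ m - 1)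
    (hlaw : TendstoInLaw
      (fun n => Measure.map (fun x => eval x (Q n)) (gaussPi (Fin (K n))))
      (gaussianReal 0 1)) (q : ℕ) :
    ∃ (N : ℕ) (C : ℝ), 0 < C ∧ ∀ n ≥ N,
      ∫⁻ x, (ENNReal.ofReal (sqField (Q n + R n) x) ^ q)⁻¹ ∂gaussPi (Fin (K n))
        ≤ ENNReal.ofReal C := by
  obtain ⟨d, rfl⟩ := Nat.exists_eq_succ_of_ne_zero (ne_zero_of_tendstoInLaw_gaussianReal hQ hlaw)
  obtain ⟨ε, C, hε, hC, hbound⟩ := exists_lintegral_sqField_pow_inv_le d q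
  have hvar : ∀ᶠ n in atTop, gaussExpect (Q n ^ 2) ∈ Set.Icc (1 / 2) 2 :=
    tendsto_gaussExpect_sq_of_tendstoInLaw hQ hlaw |>.eventually_mem
      (Icc_mem_nhds (by norm_num) (by norm_num))
  have hcum : ∀ᶠ n in atTop, fourthCumulant (Q n) ≤ ε :=
    (tendsto_fourthCumulant_of_tendstoInLaw hQ hlaw).eventually_le_const hε
  obtain ⟨N, hN⟩ := eventually_atTop.mp (hvar.and hcum)
  exact ⟨N, C, hC, fun n hn => hbound _ (Q n) (R n) (numberOp_of_mem_chaos (hQ n))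
    (totalDegree_le_of_mem_chaos (hQ n)) (hR n) (hN n hn).1 (hN n hn).2⟩

/-- On a finite sum of Wiener chaoses, if the projection on the top chaos is
asymptotically `N(0,1)` and the sequence is bounded in `L²`, then all negative moments of the
carré du champ are eventually bounded. -/
theorem negative_moments_sum_of_chaoses (m : ℕ) (K : ℕ → ℕ)
    (P Q R : (n : ℕ) → MvPolynomial (Fin (K n)) ℝ)
    (hdeg : ∀ n, (P n).totalDegree ≤ m)
    (hdecomp : ∀ n, P n = Q n + R n)
    (hQ : ∀ n, Q n ∈ chaos (K n) m)
    (hR : ∀ n, (R n).totalDegree ≤ m - 1)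
    (hlaw : TendstoInLaw
      (fun n => Measure.map (fun x => eval x (Q n)) (gaussPi (Fin (K n))))
      (gaussianReal 0 1))
    (hL2 : ∃ B : ℝ, ∀ n,
      ∫⁻ x, ENNReal.ofReal ((eval x (P n)) ^ 2) ∂gaussPi (Fin (K n)) ≤ ENNReal.ofReal B) :
    ∀ q : ℕ, 1 ≤ q → ∃ (N : ℕ) (C : ℝ), 0 < C ∧ ∀ n ≥ N,
      ∫⁻ x, (ENNReal.ofReal (sqField (P n) x) ^ q)⁻¹ ∂gaussPi (Fin (K n))
        ≤ ENNReal.ofReal C := fun q _ => by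
  simpa only [hdecomp] using negative_moments_sum_of_chaoses_general m K Q R hQ hR hlaw q
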